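/- arXiv:2405.09917 — 2 statements merged into one kernel-verified Lean document; each statement's English description precedes it below -/
import Mathlib

section
/- The set {f ∈ C_λ : h_λ(f) = 0} of continuous Lebesgue measure-preserving interval maps whose measure-theoretic entropy with respect to Lebesgue measure is zero is a dense G_δ subset of C_λ in the uniform topology. -/
open MeasureTheory Set
open scoped ENNReal

noncomputable section

/-- `C_λ`: continuous maps of `[0,1]` preserving Lebesgue measure, with the uniform metric. -/
abbrev CLam : Type := {f : C(unitInterval, unitInterval) // MeasurePreserving f volume volume}

/-- The atom `P_{s 0} ∩ f⁻¹(P_{s 1}) ∩ ⋯ ∩ f^{-(n-1)}(P_{s (n-1)})`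
of the join `⋁_{i=0}^{n-1} f^{-i} P`. -/
def joinAtom (f : unitInterval → unitInterval) {k : ℕ} (P : Fin k → Set unitInterval)
    (n : ℕ) (s : Fin n → Fin k) : Set unitInterval :=
  ⋂ i : Fin n, f^[(i : ℕ)] ⁻¹' P (s i)

/-- `h_n(f, P) = (1/n) H(⋁_{i=0}^{n-1} f^{-i} P)`. -/
def hnEnt (f : unitInterval → unitInterval) {k : ℕ} (P : Fin k → Set unitInterval)
    (n : ℕ) : ℝ :=
  (1 / (n : ℝ)) * ∑ s : Fin n → Fin k,
    -((volume (joinAtom f P n s)).toReal * Real.log (volume (joinAtom f P n s)).toReal)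

/-- `h(f, P) = lim_n h_n(f, P)`; since `n ↦ h_n(f,P)` is non-increasing and nonnegative,
the limit equals the infimum. -/
def hEnt (f : unitInterval → unitInterval) {k : ℕ} (P : Fin k → Set unitInterval) : ℝ :=
  ⨅ n : ℕ, hnEnt f P (n + 1)

/-- A finite (mod measure zero) partition of `[0,1]` into measurable sets. -/
structure IsAEPartition {k : ℕ} (P : Fin k → Set unitInterval) : Prop where
  meas : ∀ i, MeasurableSet (P i)
  cover : (⋃ i, P i) = Set.univ
  aedisj : ∀ i j, i ≠ j → volume (P i ∩ P j) = 0

/-- The measure-theoretic entropy of `f` with respect to Lebesgue measure: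
`h_λ(f) = sup {h(f,P) : P a finite partition of I}`. -/
def hLam (f : unitInterval → unitInterval) : ℝ≥0∞ :=
  ⨆ (k : ℕ) (P : Fin k → Set unitInterval) (_ : IsAEPartition P), ENNReal.ofReal (hEnt f P)

/-!
The entropy `h(f, X)` of a fixed finite observable `X` is an infimum of block entropies, each of
which is continuous in `f` for the uniform topology, so `f ↦ h(f, X)` is upper semicontinuous.
Every observable is nearly a function of the index `cell M` of the interval of length `1 / (M + 1)`
containing the point, for all large `M`, and a Fano-type bound makes this quantitative:
`h_λ(f) = 0` if and only if `h(f, cell M)` is small for arbitrarily large `M`. This exhibits the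
zero entropy maps as a countable intersection of open sets, and since `C_λ` is complete, Baire's
theorem reduces density to that of each of these open sets.

To perturb `f` into one of them, Hall's marriage theorem gives a permutation `σ` of the `M + 1`
intervals such that `f` maps some point of each interval `i` into the interval `σ i`. Approximate
the step function `x ↦ center of σ (cell M x)` in measure by a continuous `g` that stays uniformly
close to `f` and has null level sets. Replacing `g` by its rank `G x = λ {y | g y ≤ g x}` restores
measure preservation; `G` is still uniformly close to `f`, because ranking `f` itself returns `f`,
and still moves the cells by `σ` off a set of small measure. Hence the cell of `x` almost determines
that of `G x`, and `h(G, cell M)` is small.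
-/

section ShannonEntropy

variable {Ω A B : Type*} [MeasurableSpace Ω] {μ : Measure Ω}

lemma ae_measureReal_fiber_pos [Finite A] [IsFiniteMeasure μ] (Z : Ω → A) :
    ∀ᵐ ω ∂μ, 0 < μ.real (Z ⁻¹' {Z ω}) := by
  have hnull : μ (⋃ a ∈ {a | μ (Z ⁻¹' {a}) = 0}, Z ⁻¹' {a}) = 0 :=
    (measure_biUnion_null_iff (Set.to_countable _)).2 fun a ha => ha
  filter_upwards [measure_eq_zero_iff_ae_notMem.1 hnull] with ω hω
  refine measureReal_nonneg.lt_of_ne' fun h => hω ?_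
  rw [measureReal_eq_zero_iff] at h
  exact mem_biUnion (x := Z ω) h rfl

lemma integrable_comp_of_finite [Finite A] [MeasurableSpace A] [MeasurableSingletonClass A]
    [IsFiniteMeasure μ] {Z : Ω → A} (hZ : Measurable Z) (F : A → ℝ) :
    Integrable (fun ω => F (Z ω)) μ :=
  (Integrable.of_finite (f := F) (μ := μ.map Z)).comp_measurable hZ

lemma integral_comp_measurePreserving [Finite A] [MeasurableSpace A]
    [MeasurableSingletonClass A] {g : Ω → Ω} (hg : MeasurePreserving g μ μ) {X : Ω → A}
    (hX : Measurable X) (F : A → ℝ) : ∫ ω, F (X (g ω)) ∂μ = ∫ ω, F (X ω) ∂μ := by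
  conv_rhs => rw [← hg.map_eq]
  have hF : Measurable F := .of_discrete
  exact (integral_map hg.aemeasurable (hF.comp hX).aestronglyMeasurable).symm

variable [Fintype A]

/-- Shannon entropy, in nats, of the law under `μ` of a random variable with finitely many values;
equivalently, the entropy of the partition of `Ω` into the fibres of `Z`. -/
def shannonEntropy (μ : Measure Ω) (Z : Ω → A) : ℝ :=
  ∑ a, Real.negMulLog (μ.real (Z ⁻¹' {a}))

lemma shannonEntropy_nonneg [IsProbabilityMeasure μ] (Z : Ω → A) : 0 ≤ shannonEntropy μ Z :=
  Finset.sum_nonneg fun _ _ => Real.negMulLog_nonneg measureReal_nonneg measureReal_le_one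

/-- A family `r · b` of strictly positive subprobability vectors on `A`, indexed by `b : B`. It
serves as a guess for the conditional law of an `A`-valued variable given a `B`-valued one, so that
`-log r` is the cost of coding the former given the latter. -/
structure IsPosSubkernel (r : A → B → ℝ) : Prop where
  pos : ∀ a b, 0 < r a b
  sum_le_one : ∀ b, ∑ a, r a b ≤ 1

lemma IsPosSubkernel.pi {r : A → B → ℝ} (hr : IsPosSubkernel r) (n : ℕ) :
    IsPosSubkernel fun (a : Fin n → A) (b : Fin n → B) => ∏ i, r (a i) (b i) where
  pos a b := Finset.prod_pos fun i _ => hr.pos (a i) (b i)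
  sum_le_one b := by
    classical
    calc ∑ a : Fin n → A, ∏ i, r (a i) (b i) = ∏ i, ∑ a, r a (b i) := by
          rw [Finset.prod_univ_sum, Fintype.piFinset_univ]
      _ ≤ 1 := Finset.prod_le_one (fun i _ => Finset.sum_nonneg fun a _ => (hr.pos a (b i)).le)
          fun i _ => hr.sum_le_one (b i)

lemma negMulLog_le_mul_neg_log_add_sub {p q : ℝ} (hp : 0 ≤ p) (hq : 0 ≤ q)
    (hqp : q = 0 → p = 0) : Real.negMulLog p ≤ p * -Real.log q + (q - p) := by
  rcases hp.eq_or_lt with rfl | hp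
  · simpa using hq
  · have hq : 0 < q := hq.lt_of_ne' fun h => hp.ne' (hqp h)
    have hlog := mul_le_mul_of_nonneg_left (Real.log_le_sub_one_of_pos (div_pos hq hp)) hp.le
    rw [Real.log_div hq.ne' hp.ne', mul_sub p (q / p), mul_div_cancel₀ _ hp.ne'] at hlog
    rw [Real.negMulLog]
    linarith

variable [Fintype B] [MeasurableSpace A] [MeasurableSingletonClass A] [MeasurableSpace B]
  [MeasurableSingletonClass B]

lemma integral_comp_eq_sum_fiber [IsFiniteMeasure μ] {Z : Ω → A} (hZ : Measurable Z) (F : A → ℝ) :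
    ∫ ω, F (Z ω) ∂μ = ∑ a, μ.real (Z ⁻¹' {a}) * F a := by
  rw [← integral_map hZ.aemeasurable Measurable.of_discrete.aestronglyMeasurable,
    integral_fintype Integrable.of_finite]
  simp only [map_measureReal_apply hZ (measurableSet_singleton _), smul_eq_mul]

lemma sum_measureReal_fiber [IsProbabilityMeasure μ] {Z : Ω → A} (hZ : Measurable Z) :
    ∑ a, μ.real (Z ⁻¹' {a}) = 1 := by
  rw [sum_measureReal_preimage_singleton _ fun a _ => hZ (measurableSet_singleton a)]
  simp

lemma shannonEntropy_eq_integral [IsFiniteMeasure μ] {Z : Ω → A} (hZ : Measurable Z) :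
    shannonEntropy μ Z = ∫ ω, -Real.log (μ.real (Z ⁻¹' {Z ω})) ∂μ := by
  rw [integral_comp_eq_sum_fiber hZ fun a => -Real.log (μ.real (Z ⁻¹' {a}))]
  simp only [shannonEntropy, Real.negMulLog, neg_mul, mul_neg]

lemma shannonEntropy_comp_le [IsFiniteMeasure μ] {Z : Ω → A} (hZ : Measurable Z) (φ : A → B) :
    shannonEntropy μ (fun ω => φ (Z ω)) ≤ shannonEntropy μ Z := by
  have hφZ : Measurable fun ω => φ (Z ω) := Measurable.of_discrete.comp hZ
  rw [shannonEntropy_eq_integral hφZ, shannonEntropy_eq_integral hZ]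
  refine integral_mono_ae
    (integrable_comp_of_finite hφZ fun b => -Real.log (μ.real ((fun ω => φ (Z ω)) ⁻¹' {b})))
    (integrable_comp_of_finite hZ fun a => -Real.log (μ.real (Z ⁻¹' {a}))) ?_
  filter_upwards [ae_measureReal_fiber_pos (μ := μ) Z] with ω hω
  exact neg_le_neg (Real.log_le_log hω (measureReal_mono fun ω' h => congrArg φ h))

lemma shannonEntropy_le_integral_neg_log [IsProbabilityMeasure μ] {Z : Ω → A} (hZ : Measurable Z)
    {q : A → ℝ} (hq : ∀ a, 0 ≤ q a) (hac : ∀ a, q a = 0 → μ.real (Z ⁻¹' {a}) = 0)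
    (hsum : ∑ a, q a ≤ 1) : shannonEntropy μ Z ≤ ∫ ω, -Real.log (q (Z ω)) ∂μ := by
  rw [integral_comp_eq_sum_fiber hZ fun a => -Real.log (q a)]
  calc shannonEntropy μ Z
      ≤ ∑ a, (μ.real (Z ⁻¹' {a}) * -Real.log (q a) + (q a - μ.real (Z ⁻¹' {a}))) :=
        Finset.sum_le_sum fun a _ =>
          negMulLog_le_mul_neg_log_add_sub measureReal_nonneg (hq a) (hac a)
    _ = ∑ a, μ.real (Z ⁻¹' {a}) * -Real.log (q a) + (∑ a, q a - 1) := by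
        rw [Finset.sum_add_distrib, Finset.sum_sub_distrib, sum_measureReal_fiber hZ]
    _ ≤ ∑ a, μ.real (Z ⁻¹' {a}) * -Real.log (q a) := by linarith

lemma shannonEntropy_prodMk_le [IsProbabilityMeasure μ] {V : Ω → A} {W : Ω → B}
    (hV : Measurable V) (hW : Measurable W) {r : A → B → ℝ} (hr : IsPosSubkernel r) :
    shannonEntropy μ (fun ω => (V ω, W ω)) ≤
      shannonEntropy μ W + ∫ ω, -Real.log (r (V ω) (W ω)) ∂μ := by
  have hVW : Measurable fun ω => (V ω, W ω) := hV.prodMk hW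
  let w : B → ℝ := fun b => μ.real (W ⁻¹' {b})
  let q : A × B → ℝ := fun c => w c.2 * r c.1 c.2
  have hq : ∀ c, 0 ≤ q c := fun c => mul_nonneg measureReal_nonneg (hr.pos _ _).le
  have hac : ∀ c, q c = 0 → μ.real ((fun ω => (V ω, W ω)) ⁻¹' {c}) = 0 := fun c hc =>
    measureReal_mono_null (fun ω h => congrArg Prod.snd h)
      ((mul_eq_zero.1 hc).resolve_right (hr.pos _ _).ne')
  have hsum : ∑ c, q c ≤ 1 :=
    calc ∑ c, q c = ∑ b, w b * ∑ a, r a b := by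
          simp only [q, Fintype.sum_prod_type_right, Finset.mul_sum]
      _ ≤ ∑ b, w b := Finset.sum_le_sum fun b _ =>
          mul_le_of_le_one_right measureReal_nonneg (hr.sum_le_one b)
      _ = 1 := sum_measureReal_fiber hW
  calc shannonEntropy μ (fun ω => (V ω, W ω))
      ≤ ∫ ω, -Real.log (q (V ω, W ω)) ∂μ := shannonEntropy_le_integral_neg_log hVW hq hac hsum
    _ = ∫ ω, (-Real.log (w (W ω)) + -Real.log (r (V ω) (W ω))) ∂μ := by
        refine integral_congr_ae ?_
        filter_upwards [ae_measureReal_fiber_pos (μ := μ) W] with ω hω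
        rw [Real.log_mul hω.ne' (hr.pos _ _).ne', neg_add]
    _ = shannonEntropy μ W + ∫ ω, -Real.log (r (V ω) (W ω)) ∂μ := by
        rw [integral_add (integrable_comp_of_finite hW fun b => -Real.log (w b))
          (integrable_comp_of_finite hVW fun c => -Real.log (r c.1 c.2)),
          shannonEntropy_eq_integral hW]

end ShannonEntropy

section EntropyRate

variable {Ω A B : Type*}

/-- The itinerary `(X ω, X (f ω), …, X (f^[n-1] ω))` of a point `ω`, as observed through `X`. -/
def itinerary (f : Ω → Ω) (X : Ω → A) (n : ℕ) (ω : Ω) : Fin n → A := fun i => X (f^[i] ω)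

lemma itinerary_succ (f : Ω → Ω) (X : Ω → A) (n : ℕ) (ω : Ω) :
    itinerary f X (n + 1) ω = Fin.snoc (itinerary f X n ω) (X (f^[n] ω)) := by
  rw [← Fin.snoc_init_self (itinerary f X (n + 1) ω)]
  rfl

variable [MeasurableSpace Ω] {μ : Measure Ω} {f : Ω → Ω}

@[fun_prop]
lemma measurable_itinerary [MeasurableSpace A] {X : Ω → A} (hf : Measurable f) (hX : Measurable X)
    (n : ℕ) : Measurable (itinerary f X n) :=
  measurable_pi_lambda _ fun i => hX.comp (hf.iterate i)

variable [Fintype A]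

/-- The entropy `h(f, X)` of the finite-valued observable `X` under the dynamics `f`, i.e. of the
partition of `Ω` into the fibres of `X`. When `f` preserves `μ` the block entropies
`H(X, X ∘ f, …, X ∘ f^[n])` are subadditive in `n`, so this infimum is the usual limit. -/
def entropyRate (μ : Measure Ω) (f : Ω → Ω) (X : Ω → A) : ℝ :=
  ⨅ n : ℕ, shannonEntropy μ (itinerary f X (n + 1)) / ((n + 1 : ℕ) : ℝ)

variable [IsProbabilityMeasure μ]

lemma blockEntropy_div_nonneg (f : Ω → Ω) (X : Ω → A) (n : ℕ) :
    0 ≤ shannonEntropy μ (itinerary f X (n + 1)) / ((n + 1 : ℕ) : ℝ) :=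
  div_nonneg (shannonEntropy_nonneg _) (Nat.cast_nonneg _)

lemma bddBelow_range_blockEntropy_div (f : Ω → Ω) (X : Ω → A) :
    BddBelow (range fun n : ℕ => shannonEntropy μ (itinerary f X (n + 1)) / ((n + 1 : ℕ) : ℝ)) :=
  ⟨0, forall_mem_range.2 (blockEntropy_div_nonneg f X)⟩

lemma entropyRate_le (f : Ω → Ω) (X : Ω → A) (n : ℕ) :
    entropyRate μ f X ≤ shannonEntropy μ (itinerary f X (n + 1)) / ((n + 1 : ℕ) : ℝ) :=
  ciInf_le (bddBelow_range_blockEntropy_div f X) n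

variable [Fintype B] [MeasurableSpace A] [MeasurableSingletonClass A] [MeasurableSpace B]
  [MeasurableSingletonClass B] {X : Ω → A} {Y : Ω → B}

lemma shannonEntropy_itinerary_le (hf : MeasurePreserving f μ μ) (hX : Measurable X)
    (hY : Measurable Y) {r : A → B → ℝ} (hr : IsPosSubkernel r) (n : ℕ) :
    shannonEntropy μ (itinerary f X n) ≤
      shannonEntropy μ (itinerary f Y n) + n * ∫ ω, -Real.log (r (X ω) (Y ω)) ∂μ := by
  let cost : A × B → ℝ := fun c => -Real.log (r c.1 c.2)
  have hXY : Measurable fun ω => (X ω, Y ω) := hX.prodMk hY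
  have hV := measurable_itinerary hf.measurable hX n
  have hW := measurable_itinerary hf.measurable hY n
  have hstat (i : ℕ) : ∫ ω, cost (X (f^[i] ω), Y (f^[i] ω)) ∂μ = ∫ ω, cost (X ω, Y ω) ∂μ :=
    integral_comp_measurePreserving (hf.iterate i) hXY cost
  calc shannonEntropy μ (itinerary f X n)
      ≤ shannonEntropy μ (fun ω => (itinerary f X n ω, itinerary f Y n ω)) :=
        shannonEntropy_comp_le (hV.prodMk hW) Prod.fst
    _ ≤ shannonEntropy μ (itinerary f Y n) +
          ∫ ω, -Real.log (∏ i, r (itinerary f X n ω i) (itinerary f Y n ω i)) ∂μ :=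
        shannonEntropy_prodMk_le hV hW (hr.pi n)
    _ = shannonEntropy μ (itinerary f Y n) +
          ∫ ω, ∑ i : Fin n, cost (X (f^[i] ω), Y (f^[i] ω)) ∂μ := by
        simp only [itinerary, cost, Real.log_prod fun _ _ => (hr.pos _ _).ne',
          Finset.sum_neg_distrib]
    _ = shannonEntropy μ (itinerary f Y n) + n * ∫ ω, cost (X ω, Y ω) ∂μ := by
        rw [integral_finsetSum (f := fun (i : Fin n) ω => cost (X (f^[i] ω), Y (f^[i] ω))) _
          fun i _ => integrable_comp_of_finite (hXY.comp (hf.iterate i).measurable) cost]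
        simp only [hstat, Finset.sum_const, Finset.card_univ, Fintype.card_fin, nsmul_eq_mul]

lemma entropyRate_le_add_integral (hf : MeasurePreserving f μ μ) (hX : Measurable X)
    (hY : Measurable Y) {r : A → B → ℝ} (hr : IsPosSubkernel r) :
    entropyRate μ f X ≤ entropyRate μ f Y + ∫ ω, -Real.log (r (X ω) (Y ω)) ∂μ := by
  rw [← sub_le_iff_le_add]
  refine le_ciInf fun n => ?_
  have hn : (0 : ℝ) < ((n + 1 : ℕ) : ℝ) := by positivity
  have hblock := shannonEntropy_itinerary_le hf hX hY hr (n + 1)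
  rw [sub_le_iff_le_add, div_add' _ _ _ hn.ne', mul_comm (∫ _, _ ∂μ)]
  exact (entropyRate_le f X n).trans (div_le_div_of_nonneg_right hblock hn.le)

lemma shannonEntropy_itinerary_succ_le (hf : MeasurePreserving f μ μ) (hX : Measurable X)
    {r : A → A → ℝ} (hr : IsPosSubkernel r) (n : ℕ) :
    shannonEntropy μ (itinerary f X (n + 2)) ≤
      shannonEntropy μ (itinerary f X (n + 1)) + ∫ ω, -Real.log (r (X (f ω)) (X ω)) ∂μ := by
  let cost : A × A → ℝ := fun c => -Real.log (r c.1 c.2)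
  have hW := measurable_itinerary hf.measurable hX (n + 1)
  have hV : Measurable fun ω => X (f^[n + 1] ω) := hX.comp (hf.measurable.iterate _)
  have hrlast : IsPosSubkernel fun (a : A) (w : Fin (n + 1) → A) => r a (w (Fin.last n)) :=
    ⟨fun a w => hr.pos a _, fun w => hr.sum_le_one _⟩
  calc shannonEntropy μ (itinerary f X (n + 2))
      ≤ shannonEntropy μ (fun ω => (X (f^[n + 1] ω), itinerary f X (n + 1) ω)) := by
        simp only [funext (itinerary_succ f X (n + 1))]
        exact shannonEntropy_comp_le (hV.prodMk hW) fun c => (Fin.snoc c.2 c.1 : Fin (n + 2) → A)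
    _ ≤ shannonEntropy μ (itinerary f X (n + 1)) +
          ∫ ω, cost (X (f (f^[n] ω)), X (f^[n] ω)) ∂μ := by
        simp only [Function.iterate_succ_apply'] at hV ⊢
        exact shannonEntropy_prodMk_le hV hW hrlast
    _ = shannonEntropy μ (itinerary f X (n + 1)) + ∫ ω, cost (X (f ω), X ω) ∂μ := by
        rw [integral_comp_measurePreserving (X := fun ω => (X (f ω), X ω)) (hf.iterate n)
          ((hX.comp hf.measurable).prodMk hX) cost]

lemma entropyRate_le_integral (hf : MeasurePreserving f μ μ) (hX : Measurable X)
    {r : A → A → ℝ} (hr : IsPosSubkernel r) :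
    entropyRate μ f X ≤ ∫ ω, -Real.log (r (X (f ω)) (X ω)) ∂μ := by
  set c := ∫ ω, -Real.log (r (X (f ω)) (X ω)) ∂μ
  set H₁ := shannonEntropy μ (itinerary f X 1)
  have hblock (n : ℕ) : shannonEntropy μ (itinerary f X (n + 1)) ≤ H₁ + n * c := by
    induction n with
    | zero => simp [H₁]
    | succ n ih =>
      push_cast
      linarith [shannonEntropy_itinerary_succ_le hf hX hr n]
  have hlim : Filter.Tendsto (fun n : ℕ => (H₁ + n * c) / ((n + 1 : ℕ) : ℝ)) Filter.atTop
      (nhds c) := by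
    have h0 := tendsto_one_div_add_atTop_nhds_zero_nat.const_mul (H₁ - c) |>.add_const c
    rw [mul_zero, zero_add] at h0
    refine h0.congr fun n => ?_
    push_cast
    field_simp
    ring
  exact ge_of_tendsto' hlim fun n => (entropyRate_le f X n).trans
    (div_le_div_of_nonneg_right (hblock n) (Nat.cast_nonneg _))

end EntropyRate

section FanoKernel

variable {Ω A B : Type*} [MeasurableSpace Ω] {μ : Measure Ω} [Fintype A] {φ : B → A} {ε : ℝ}

open Classical in
/-- The kernel that guesses `φ b` with probability at least `exp (-ε)` and spreads the remaining
mass uniformly. Coding with it is cheap for a variable that is nearly always equal to `φ b`. -/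
def fanoKernel (φ : B → A) (ε : ℝ) (a : A) (b : B) : ℝ :=
  if a = φ b then Real.exp (-ε) else (1 - Real.exp (-ε)) / Fintype.card A

lemma isPosSubkernel_fanoKernel (φ : B → A) (hε : 0 < ε) : IsPosSubkernel (fanoKernel φ ε) := by
  classical
  have hgap : 0 < 1 - Real.exp (-ε) := sub_pos.2 (Real.exp_lt_one_iff.2 (neg_lt_zero.2 hε))
  refine ⟨fun a b => ?_, fun b => ?_⟩
  · have : 0 < Fintype.card A := Fintype.card_pos_iff.2 ⟨a⟩
    unfold fanoKernel
    split_ifs <;> positivity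
  · have : (Fintype.card A : ℝ) ≠ 0 := Nat.cast_ne_zero.2 (Fintype.card_pos_iff.2 ⟨φ b⟩).ne'
    calc ∑ a, fanoKernel φ ε a b
        ≤ ∑ a, ((if a = φ b then Real.exp (-ε) else 0) +
            (1 - Real.exp (-ε)) / Fintype.card A) := by
          refine Finset.sum_le_sum fun a _ => ?_
          unfold fanoKernel
          split_ifs
          · exact le_add_of_nonneg_right (by positivity)
          · rw [zero_add]
      _ = 1 := by
          rw [Finset.sum_add_distrib, Finset.sum_ite_eq', if_pos (Finset.mem_univ _),
            Finset.sum_const, Finset.card_univ, nsmul_eq_mul, mul_div_cancel₀ _ this]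
          ring

lemma neg_log_fanoKernel_le (hε : 0 < ε) (a : A) (b : B) :
    -Real.log (fanoKernel φ ε a b) ≤
      ε + {c : A × B | c.1 ≠ φ c.2}.indicator
        (fun _ => Real.log (Fintype.card A / (1 - Real.exp (-ε)))) (a, b) := by
  by_cases h : a = φ b
  · simp [fanoKernel, h]
  · have hmem : (a, b) ∈ {c : A × B | c.1 ≠ φ c.2} := h
    simp only [fanoKernel, if_neg h, indicator_of_mem hmem, ← Real.log_inv, inv_div]
    exact le_add_of_nonneg_left hε.le

variable [MeasurableSpace A] [MeasurableSingletonClass A] [MeasurableSpace B]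
  [MeasurableSingletonClass B] [IsProbabilityMeasure μ] {X : Ω → A} {Y : Ω → B} {f : Ω → Ω}

lemma integral_neg_log_fanoKernel_le [Finite B] (hX : Measurable X) (hY : Measurable Y) (φ : B → A)
    (hε : 0 < ε) :
    ∫ ω, -Real.log (fanoKernel φ ε (X ω) (Y ω)) ∂μ ≤
      ε + μ.real {ω | X ω ≠ φ (Y ω)} * Real.log (Fintype.card A / (1 - Real.exp (-ε))) := by
  set L := Real.log (Fintype.card A / (1 - Real.exp (-ε)))
  let S := {c : A × B | c.1 ≠ φ c.2}
  have hXY : Measurable fun ω => (X ω, Y ω) := hX.prodMk hY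
  have hS : MeasurableSet {ω | X ω ≠ φ (Y ω)} := hXY (toFinite S).measurableSet
  calc ∫ ω, -Real.log (fanoKernel φ ε (X ω) (Y ω)) ∂μ
      ≤ ∫ ω, (ε + {ω | X ω ≠ φ (Y ω)}.indicator (fun _ => L) ω) ∂μ :=
        integral_mono
          (integrable_comp_of_finite hXY fun c => -Real.log (fanoKernel φ ε c.1 c.2))
          (integrable_comp_of_finite hXY fun c => ε + S.indicator (fun _ => L) c)
          fun ω => neg_log_fanoKernel_le hε (X ω) (Y ω)
    _ = ε + μ.real {ω | X ω ≠ φ (Y ω)} * L := by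
        rw [integral_add (integrable_const ε) ((integrable_const L).indicator hS),
          integral_const, probReal_univ, one_smul, integral_indicator_const L hS, smul_eq_mul]

lemma entropyRate_le_add_fano [Fintype B] (hf : MeasurePreserving f μ μ) (hX : Measurable X)
    (hY : Measurable Y) (φ : B → A) (hε : 0 < ε) :
    entropyRate μ f X ≤ entropyRate μ f Y +
      (ε + μ.real {ω | X ω ≠ φ (Y ω)} * Real.log (Fintype.card A / (1 - Real.exp (-ε)))) :=
  (entropyRate_le_add_integral hf hX hY (isPosSubkernel_fanoKernel φ hε)).trans
    (add_le_add_right (integral_neg_log_fanoKernel_le hX hY φ hε) _)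

lemma entropyRate_le_fano (hf : MeasurePreserving f μ μ) (hX : Measurable X) (φ : A → A)
    (hε : 0 < ε) :
    entropyRate μ f X ≤
      ε + μ.real {ω | X (f ω) ≠ φ (X ω)} * Real.log (Fintype.card A / (1 - Real.exp (-ε))) :=
  (entropyRate_le_integral hf hX (isPosSubkernel_fanoKernel φ hε)).trans
    (integral_neg_log_fanoKernel_le (hX.comp hf.measurable) hX φ hε)

lemma exists_pos_forall_mul_le (L : ℝ) (hε : 0 < ε) :
    ∃ η > 0, ∀ t, 0 ≤ t → t ≤ η → t * L ≤ ε := by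
  obtain ⟨η, hη, hLη⟩ := exists_pos_mul_lt hε |L|
  refine ⟨η, hη, fun t ht htη => ?_⟩
  calc t * L ≤ t * |L| := mul_le_mul_of_nonneg_left (le_abs_self L) ht
    _ ≤ η * |L| := mul_le_mul_of_nonneg_right htη (abs_nonneg L)
    _ ≤ ε := (mul_comm η |L|).trans_le hLη.le

end FanoKernel

section UpperSemicontinuity

open Filter Topology
open scoped symmDiff

variable {Ω A : Type*}

lemma iInter_symmDiff_iInter_subset {ι : Type*} (s t : ι → Set Ω) :
    (⋂ i, s i) ∆ (⋂ i, t i) ⊆ ⋃ i, s i ∆ t i := by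
  rintro ω (⟨hs, ht⟩ | ⟨ht, hs⟩) <;>
  · simp only [mem_iInter, not_forall] at hs ht
    grind [mem_iUnion]

lemma itinerary_fiber_eq_iInter (f : Ω → Ω) (X : Ω → A) {n : ℕ} (s : Fin n → A) :
    itinerary f X n ⁻¹' {s} = ⋂ i : Fin n, f^[i] ⁻¹' (X ⁻¹' {s i}) := by
  ext ω
  simp [itinerary, funext_iff]

variable [TopologicalSpace Ω] [LocallyCompactPair Ω Ω]

lemma exists_continuous_iterate (n : ℕ) :
    ∃ F : C(Ω, Ω) → C(Ω, Ω), Continuous F ∧ ∀ f, ⇑(F f) = f^[n] := by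
  induction n with
  | zero => exact ⟨fun _ => ContinuousMap.id Ω, continuous_const, fun _ => rfl⟩
  | succ n ih =>
    obtain ⟨F, hF, hFn⟩ := ih
    refine ⟨fun f => (F f).comp f, hF.compCM continuous_id, fun f => ?_⟩
    rw [Function.iterate_succ, ← hFn f, ContinuousMap.coe_comp]

variable [MeasurableSpace Ω] [BorelSpace Ω] [R1Space Ω] {μ : Measure Ω} [IsProbabilityMeasure μ]
  [μ.InnerRegularCompactLTTop]

lemma tendsto_measureReal_symmDiff_preimage_iterate
    (g : {f : C(Ω, Ω) // MeasurePreserving f μ μ}) (n : ℕ) {s : Set Ω} (hs : MeasurableSet s) :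
    Tendsto (fun f : {f : C(Ω, Ω) // MeasurePreserving f μ μ} =>
      μ.real ((f.1^[n] ⁻¹' s) ∆ (g.1^[n] ⁻¹' s))) (𝓝 g) (𝓝 0) := by
  obtain ⟨F, hF, hFn⟩ := exists_continuous_iterate (Ω := Ω) n
  have hmp (f : {f : C(Ω, Ω) // MeasurePreserving f μ μ}) : MeasurePreserving (F f.1) μ μ := by
    rw [hFn]
    exact f.2.iterate n
  have h := tendsto_measure_symmDiff_preimage_nhds_zero
    ((hF.comp continuous_subtype_val).tendsto g) (.of_forall hmp) (hmp g)
    hs.nullMeasurableSet (measure_ne_top μ _)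
  simp only [Function.comp_apply, hFn] at h
  exact (ENNReal.tendsto_toReal ENNReal.zero_ne_top).comp h

variable [MeasurableSpace A] [MeasurableSingletonClass A] {X : Ω → A}

lemma continuous_measureReal_itinerary_fiber (hX : Measurable X) (n : ℕ) (s : Fin n → A) :
    Continuous fun f : {f : C(Ω, Ω) // MeasurePreserving f μ μ} =>
      μ.real (itinerary f.1 X n ⁻¹' {s}) := by
  have hlevel (i : Fin n) : MeasurableSet (X ⁻¹' {s i}) := hX (measurableSet_singleton _)
  have hfiber (f : C(Ω, Ω)) : MeasurableSet (⋂ i : Fin n, f^[i] ⁻¹' (X ⁻¹' {s i})) :=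
    MeasurableSet.iInter fun i => f.measurable.iterate i (hlevel i)
  refine continuous_iff_continuousAt.2 fun g => tendsto_iff_dist_tendsto_zero.2 ?_
  have hsum := tendsto_finsetSum Finset.univ fun (i : Fin n) _ =>
    tendsto_measureReal_symmDiff_preimage_iterate g i (hlevel i)
  rw [Finset.sum_const_zero] at hsum
  refine squeeze_zero (fun f => dist_nonneg) (fun f => ?_) hsum
  simp only [Real.dist_eq, itinerary_fiber_eq_iInter]
  calc _ ≤ μ.real ((⋂ i : Fin n, f.1^[i] ⁻¹' (X ⁻¹' {s i})) ∆
            (⋂ i : Fin n, g.1^[i] ⁻¹' (X ⁻¹' {s i}))) :=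
        abs_measureReal_sub_le_measureReal_symmDiff (hfiber f).nullMeasurableSet
          (hfiber g).nullMeasurableSet
    _ ≤ μ.real (⋃ i : Fin n, (f.1^[i] ⁻¹' (X ⁻¹' {s i})) ∆ (g.1^[i] ⁻¹' (X ⁻¹' {s i}))) :=
        measureReal_mono (iInter_symmDiff_iInter_subset _ _)
    _ ≤ _ := measureReal_iUnion_fintype_le _

lemma upperSemicontinuous_entropyRate [Fintype A] (hX : Measurable X) :
    UpperSemicontinuous fun f : {f : C(Ω, Ω) // MeasurePreserving f μ μ} =>
      entropyRate μ f.1 X := by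
  refine upperSemicontinuous_ciInf (fun f => bddBelow_range_blockEntropy_div f.1 X) fun n => ?_
  refine Continuous.upperSemicontinuous (Continuous.div_const ?_ _)
  exact continuous_finsetSum _ fun s _ =>
    Real.continuous_negMulLog.comp (continuous_measureReal_itinerary_fiber hX (n + 1) s)

end UpperSemicontinuity

section PartitionEntropy

variable {f : unitInterval → unitInterval} {k : ℕ}

lemma isAEPartition_fibers {X : unitInterval → Fin k} (hX : Measurable X) :
    IsAEPartition fun i => X ⁻¹' {i} where
  meas i := hX (measurableSet_singleton i)
  cover := iUnion_eq_univ_iff.2 fun x => ⟨X x, rfl⟩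
  aedisj i j hij := by
    rw [← preimage_inter, singleton_inter_eq_empty.2 (notMem_singleton_iff.2 hij),
      preimage_empty, measure_empty]

lemma IsAEPartition.exists_measurable_fibers_ae_eq {P : Fin k → Set unitInterval}
    (hP : IsAEPartition P) :
    ∃ X : unitInterval → Fin k, Measurable X ∧ ∀ i, X ⁻¹' {i} =ᵐ[volume] P i := by
  choose X hX using iUnion_eq_univ_iff.1 hP.cover
  have hfiber (i : Fin k) : X ⁻¹' {i} =ᵐ[volume] P i := by
    have hsub : X ⁻¹' {i} ⊆ P i := by
      rintro x rfl
      exact hX x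
    have hdiff : P i \ X ⁻¹' {i} ⊆ ⋃ j ∈ {j | i ≠ j}, P i ∩ P j := fun x hx =>
      mem_biUnion (x := X x) (Ne.symm hx.2) ⟨hx.1, hX x⟩
    refine hsub.eventuallyLE.antisymm (ae_le_set.2 (measure_mono_null hdiff ?_))
    exact (measure_biUnion_null_iff (Set.to_countable _)).2 fun j hj => hP.aedisj i j hj
  have hnull : NullMeasurable X volume := fun s _ => by
    rw [← biUnion_preimage_singleton]
    exact .biUnion (Set.to_countable s) fun i _ =>
      (hP.meas i).nullMeasurableSet.congr (hfiber i).symm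
  refine ⟨hnull.aemeasurable.mk X, hnull.aemeasurable.measurable_mk, fun i => ?_⟩
  refine Filter.EventuallyEq.trans ?_ (hfiber i)
  exact hnull.aemeasurable.ae_eq_mk.symm.preimage {i}

lemma hEnt_eq_entropyRate (hf : MeasurePreserving f volume volume) {P : Fin k → Set unitInterval}
    {X : unitInterval → Fin k} (hXP : ∀ i, X ⁻¹' {i} =ᵐ[volume] P i) :
    hEnt f P = entropyRate volume f X := by
  have hatom (n : ℕ) (s : Fin n → Fin k) :
      joinAtom f P n s =ᵐ[volume] itinerary f X n ⁻¹' {s} := by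
    rw [itinerary_fiber_eq_iInter]
    exact .countable_iInter fun i =>
      (hf.iterate i).quasiMeasurePreserving.preimage_ae_eq (hXP (s i)).symm
  simp only [hEnt, hnEnt, entropyRate, shannonEntropy, Real.negMulLog, Measure.real,
    measure_congr (hatom _ _), neg_mul, div_eq_inv_mul, mul_one]

lemma hLam_eq_zero_iff (hf : MeasurePreserving f volume volume) :
    hLam f = 0 ↔
      ∀ (k : ℕ) (X : unitInterval → Fin k), Measurable X → entropyRate volume f X ≤ 0 := by
  simp only [hLam, ENNReal.iSup_eq_zero, ENNReal.ofReal_eq_zero]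
  refine forall_congr' fun k => ⟨fun h X hX => ?_, fun h P hP => ?_⟩
  · rw [← hEnt_eq_entropyRate hf fun i => Filter.EventuallyEq.rfl]
    exact h _ (isAEPartition_fibers hX)
  · obtain ⟨X, hX, hXP⟩ := hP.exists_measurable_fibers_ae_eq
    exact (hEnt_eq_entropyRate hf hXP).trans_le (h X hX)

end PartitionEntropy

section Cells

variable {M : ℕ}

/-- The index of the interval `[i / (M + 1), (i + 1) / (M + 1))` containing `x`; clamping puts the
right endpoint `1` into the last of these intervals. -/
def cell (M : ℕ) (x : unitInterval) : Fin (M + 1) := Fin.clamp ⌊((M : ℝ) + 1) * x⌋₊ M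

lemma coe_cell_le (M : ℕ) (x : unitInterval) : (cell M x : ℝ) ≤ (M + 1) * x := by
  have hx : 0 ≤ ((M : ℝ) + 1) * x := mul_nonneg (by positivity) x.2.1
  calc (cell M x : ℝ) ≤ ⌊((M : ℝ) + 1) * x⌋₊ := by
        rw [cell, Fin.coe_clamp]
        exact_mod_cast min_le_left _ _
    _ ≤ (M + 1) * x := Nat.floor_le hx

lemma le_coe_cell_add_one (M : ℕ) (x : unitInterval) : (M + 1) * (x : ℝ) ≤ cell M x + 1 := by
  rw [cell, Fin.coe_clamp, Nat.cast_min, ← min_add_add_right]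
  exact le_min (Nat.lt_floor_add_one _).le (mul_le_of_le_one_right (by positivity) x.2.2)

lemma cell_eq_of_le_of_lt {x : unitInterval} {i : Fin (M + 1)} (hi : (i : ℝ) ≤ (M + 1) * x)
    (hi' : (M + 1) * (x : ℝ) < i + 1) : cell M x = i := by
  have hfloor : ⌊((M : ℝ) + 1) * x⌋₊ = i :=
    (Nat.floor_eq_iff (i.1.cast_nonneg.trans hi)).2 ⟨hi, hi'⟩
  exact Fin.ext (by rw [cell, Fin.coe_clamp, hfloor, min_eq_left i.is_le])

@[fun_prop]
lemma measurable_cell (M : ℕ) : Measurable (cell M) :=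
  (Measurable.of_discrete (f := fun n => Fin.clamp n M)).comp
    (Nat.measurable_floor.comp (measurable_subtype_coe.const_mul _))

lemma dist_le_of_cell_eq {x y : unitInterval} (h : cell M x = cell M y) :
    dist x y ≤ 1 / (M + 1) := by
  have hx := coe_cell_le M x
  have hx' := le_coe_cell_add_one M x
  rw [h] at hx hx'
  have hy := coe_cell_le M y
  have hy' := le_coe_cell_add_one M y
  have hM : (0 : ℝ) < M + 1 := by positivity
  rw [Subtype.dist_eq, Real.dist_eq, abs_le, neg_le_sub_iff_le_add, sub_le_iff_le_add,
    div_add' _ _ _ hM.ne', add_div' _ _ _ hM.ne', le_div_iff₀' hM, le_div_iff₀' hM]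
  constructor <;> linarith

lemma measureReal_cell_fiber (i : Fin (M + 1)) :
    volume.real (cell M ⁻¹' {i}) = 1 / (M + 1) := by
  have hM : (0 : ℝ) < M + 1 := by positivity
  have hi : (i : ℝ) + 1 ≤ M + 1 := by exact_mod_cast i.is_lt
  let lo : unitInterval := ⟨i / (M + 1), by positivity, (div_le_one hM).2 (by linarith)⟩
  let hi : unitInterval := ⟨(i + 1) / (M + 1), by positivity, (div_le_one hM).2 hi⟩
  have hlen : (hi - lo : ℝ) = 1 / (M + 1) := by simp only [hi, lo]; ring
  have hsub : cell M ⁻¹' {i} ⊆ Icc lo hi := by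
    rintro x rfl
    exact ⟨(div_le_iff₀' hM).2 (coe_cell_le M x), (le_div_iff₀' hM).2 (le_coe_cell_add_one M x)⟩
  have hsup : Ico lo hi ⊆ cell M ⁻¹' {i} := fun x hx =>
    cell_eq_of_le_of_lt ((div_le_iff₀' hM).1 hx.1) ((lt_div_iff₀' hM).1 hx.2)
  refine le_antisymm ((measureReal_mono hsub).trans_eq ?_)
    (Eq.trans_le ?_ (measureReal_mono hsup)) <;>
  rw [measureReal_def]
  · rw [unitInterval.volume_Icc, hlen, ENNReal.toReal_ofReal (by positivity)]
  · rw [unitInterval.volume_Ico, hlen, ENNReal.toReal_ofReal (by positivity)]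

lemma measureReal_cell_preimage (S : Finset (Fin (M + 1))) :
    volume.real (cell M ⁻¹' S) = S.card / (M + 1) := by
  rw [← sum_measureReal_preimage_singleton S fun i _ =>
    measurable_cell M (measurableSet_singleton i)]
  simp only [measureReal_cell_fiber, Finset.sum_const, nsmul_eq_mul, mul_one_div]

end Cells

section CellGenerator

lemma exists_continuous_measureReal_le_abs_sub_le {Ω : Type*} [TopologicalSpace Ω] [NormalSpace Ω]
    [MeasurableSpace Ω] [BorelSpace Ω] {μ : Measure Ω} [IsFiniteMeasure μ] [μ.WeaklyRegular]
    {F : Ω → ℝ} (hF : Integrable F μ) {r η : ℝ} (hr : 0 < r) (hη : 0 < η) :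
    ∃ g : Ω → ℝ, Continuous g ∧ μ.real {ω | r ≤ |F ω - g ω|} ≤ η := by
  obtain ⟨g, hg, hgint⟩ := hF.exists_boundedContinuous_integral_sub_le (mul_pos hr hη)
  refine ⟨g, g.continuous, le_of_mul_le_mul_left (le_trans ?_ hg) hr⟩
  exact mul_meas_ge_le_integral_of_nonneg (.of_forall fun ω => norm_nonneg (F ω - g ω))
    (hF.sub hgint).norm r

lemma exists_comp_cell_approx {k : ℕ} {X : unitInterval → Fin k} (hX : Measurable X) {η : ℝ}
    (hη : 0 < η) :
    ∃ M₀ : ℕ, ∀ M ≥ M₀, ∃ φ : Fin (M + 1) → Fin k,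
      volume.real {x | X x ≠ φ (cell M x)} ≤ η := by
  obtain ⟨g, hg, hgX⟩ := exists_continuous_measureReal_le_abs_sub_le (r := 1 / 4)
    (integrable_comp_of_finite (μ := volume) hX fun i => ((i : ℕ) : ℝ)) (by norm_num) hη
  set B := {x | 1 / 4 ≤ |((X x : ℕ) : ℝ) - g x|}
  obtain ⟨δ, hδ, hgδ⟩ := Metric.uniformContinuous_iff.1
    (CompactSpace.uniformContinuous_of_continuous hg) (1 / 2) (by norm_num)
  obtain ⟨M₀, hM₀⟩ := exists_nat_one_div_lt hδ
  refine ⟨M₀, fun M hM => ?_⟩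
  have hconst {x y : unitInterval} (hx : x ∉ B) (hy : y ∉ B) (hxy : cell M x = cell M y) :
      X x = X y := by
    have hdist : dist x y < δ :=
      ((dist_le_of_cell_eq hxy).trans (Nat.one_div_le_one_div hM)).trans_lt hM₀
    have hgxy : |g x - g y| < 1 / 2 := hgδ hdist
    simp only [B, mem_ofPred_eq, not_le, abs_lt] at hx hy hgxy
    have hlt : |((X x : ℕ) : ℤ) - (X y : ℕ)| < 1 := by
      rify
      exact abs_lt.2 ⟨by linarith, by linarith⟩
    exact Fin.ext (by exact_mod_cast sub_eq_zero.1 (Int.abs_lt_one_iff.1 hlt))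
  have hval (i : Fin (M + 1)) : ∃ a, ∀ x ∉ B, cell M x = i → X x = a := by
    by_cases h : ∃ y ∉ B, cell M y = i
    · obtain ⟨y, hy, rfl⟩ := h
      exact ⟨X y, fun x hx hxy => hconst hx hy hxy⟩
    · exact ⟨X 0, fun x hx hxi => (h ⟨x, hx, hxi⟩).elim⟩
  choose φ hφ using hval
  refine ⟨φ, (measureReal_mono fun x hx => ?_).trans hgX⟩
  exact of_not_not fun hxB => hx (hφ _ x hxB rfl)

lemma hLam_eq_zero_iff_cell {f : unitInterval → unitInterval}
    (hf : MeasurePreserving f volume volume) :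
    hLam f = 0 ↔
      ∀ N : ℕ, ∃ M ≥ N, entropyRate volume f (cell M) < 1 / ((N : ℝ) + 1) := by
  rw [hLam_eq_zero_iff hf]
  refine ⟨fun h N => ⟨N, le_rfl, ?_⟩, fun h k X hX => ?_⟩
  · exact (h _ _ (measurable_cell N)).trans_lt Nat.one_div_pos_of_nat
  · refine le_of_forall_pos_le_add fun ε hε => ?_
    have hε3 : 0 < ε / 3 := by positivity
    obtain ⟨η, hη, hLη⟩ := exists_pos_forall_mul_le
      (Real.log (Fintype.card (Fin k) / (1 - Real.exp (-(ε / 3))))) hε3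
    obtain ⟨M₀, hM₀⟩ := exists_comp_cell_approx hX hη
    obtain ⟨N, hN⟩ := exists_nat_one_div_lt hε3
    obtain ⟨M, hM, hrate⟩ := h (max M₀ N)
    obtain ⟨φ, hφ⟩ := hM₀ M ((le_max_left _ _).trans hM)
    have hfano := entropyRate_le_add_fano hf hX (measurable_cell M) φ hε3
    have hN' : 1 / (((max M₀ N : ℕ) : ℝ) + 1) ≤ 1 / (N + 1) :=
      Nat.one_div_le_one_div (le_max_right _ _)
    linarith [hLη _ measureReal_nonneg hφ]

end CellGenerator

section UniformPartitions

variable {Ω A : Type*} [MeasurableSpace Ω] {μ : Measure Ω} [IsFiniteMeasure μ] [Finite A]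
  [MeasurableSpace A] [MeasurableSingletonClass A]

/-- Hall's condition holds because `f` preserves measure: the image of a union of `m` fibres of
equal measure cannot fit into fewer than `m` of them. -/
lemma exists_perm_forall_exists_mem_fiber {Z : Ω → A} (hZ : Measurable Z) {w : ℝ} (hw : 0 < w)
    (hunif : ∀ a, μ.real (Z ⁻¹' {a}) = w) {f : Ω → Ω} (hf : MeasurePreserving f μ μ) :
    ∃ σ : Equiv.Perm A, ∀ a, ∃ x, Z x = a ∧ Z (f x) = σ a := by
  classical
  have := Fintype.ofFinite A
  have hmeas (S : Finset A) : MeasurableSet (Z ⁻¹' S) := hZ S.measurableSet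
  have hcard (S : Finset A) : μ.real (Z ⁻¹' S) = S.card * w := by
    rw [← sum_measureReal_preimage_singleton S fun a _ => hZ (measurableSet_singleton a)]
    simp only [hunif, Finset.sum_const, nsmul_eq_mul]
  let hit : A → Finset A := fun a => {b | ∃ x, Z x = a ∧ Z (f x) = b}
  have hall (S : Finset A) : S.card ≤ (S.biUnion hit).card := by
    have hsub : Z ⁻¹' S ⊆ f ⁻¹' (Z ⁻¹' (S.biUnion hit)) := fun x hx => by
      simp only [hit, mem_preimage, Finset.coe_biUnion, mem_iUnion, Finset.coe_filter,
        Finset.mem_univ, true_and]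
      exact ⟨Z x, hx, x, rfl, rfl⟩
    have hle := measureReal_mono (μ := μ) hsub
    rw [hf.measureReal_preimage (hmeas _).nullMeasurableSet, hcard, hcard] at hle
    exact_mod_cast le_of_mul_le_mul_right hle hw
  obtain ⟨σ, hσ, hσhit⟩ := (Finset.all_card_le_biUnion_card_iff_exists_injective hit).1 hall
  refine ⟨Equiv.ofBijective σ (Finite.injective_iff_bijective.1 hσ), fun a => ?_⟩
  simpa only [hit, Finset.mem_filter, Finset.mem_univ, true_and, Equiv.ofBijective_apply] using
    hσhit a

end UniformPartitions

section NullLevelSets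

/-- For distinct pairs `(t, c)` the sets `{g + t * h = c}` are almost disjoint, so only countably
many of them have positive measure. -/
lemma exists_forall_measure_add_mul_eq_zero {Ω : Type*} [MeasurableSpace Ω] {μ : Measure Ω}
    [SFinite μ] {g h : Ω → ℝ} (hg : Measurable g) (hh : Measurable h)
    (hnull : ∀ c, μ {x | h x = c} = 0) {t₀ : ℝ} (ht₀ : 0 < t₀) :
    ∃ t, 0 < t ∧ t < t₀ ∧ ∀ c, μ {x | g x + t * h x = c} = 0 := by
  let level : ℝ × ℝ → Set Ω := fun i => {x | g x + i.1 * h x = i.2}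
  have hmeas (i : ℝ × ℝ) : MeasurableSet (level i) :=
    (hg.add (hh.const_mul i.1)) (measurableSet_singleton i.2)
  have hdisj : Pairwise (Function.onFun (AEDisjoint μ) level) := by
    rintro ⟨t, c⟩ ⟨t', c'⟩ hne
    refine measure_mono_null (fun x hx => ?_) (hnull ((c - c') / (t - t')))
    obtain ⟨hx, hx'⟩ : g x + t * h x = c ∧ g x + t' * h x = c' := hx
    have ht : t - t' ≠ 0 := sub_ne_zero.2 fun h => hne (by subst h; rw [← hx, ← hx'])
    rw [mem_ofPred_eq, eq_div_iff ht]
    linarith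
  have hcount : {i | 0 < μ (level i)}.Countable :=
    Measure.countable_meas_pos_of_disjoint_iUnion₀ (fun i => (hmeas i).nullMeasurableSet) hdisj
  obtain ⟨t, ht, ht0, htt₀⟩ := ((hcount.image Prod.fst).dense_compl ℝ).exists_between ht₀
  refine ⟨t, ht0, htt₀, fun c => ?_⟩
  by_contra hpos
  exact ht ⟨(t, c), pos_iff_ne_zero.2 hpos, rfl⟩

lemma abs_sub_max_min_le {p q a b : ℝ} (hap : a ≤ p) (hpb : p ≤ b) :
    |p - max a (min b q)| ≤ |p - q| :=
  calc |p - max a (min b q)| = |max a (min b p) - max a (min b q)| := by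
        rw [min_eq_right hpb, max_eq_right hap]
    _ = |max (min b p) a - max (min b q) a| := by simp only [max_comm a]
    _ ≤ |min b p - min b q| := abs_max_sub_max_le_abs _ _ _
    _ = |min p b - min q b| := by simp only [min_comm b]
    _ ≤ |p - q| := (abs_min_sub_min_le_max ..).trans_eq (by simp)

lemma exists_continuous_nullLevel_approx {f p : unitInterval → ℝ} (hf : Continuous f)
    (hp : Integrable p) {c c' r η : ℝ} (hpf : ∀ x, |p x - f x| ≤ c) (hc : c < c') (hr : 0 < r)
    (hη : 0 < η) :
    ∃ g : unitInterval → ℝ, Continuous g ∧ (∀ a, volume {x | g x = a} = 0) ∧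
      (∀ x, |g x - f x| ≤ c') ∧ volume.real {x | r ≤ |p x - g x|} ≤ η := by
  obtain ⟨g₀, hg₀, hg₀p⟩ := exists_continuous_measureReal_le_abs_sub_le hp (half_pos hr) hη
  let g₁ : unitInterval → ℝ := fun x => max (f x - c) (min (f x + c) (g₀ x))
  have hg₁ : Continuous g₁ := by fun_prop
  have hg₁p (x : unitInterval) : |p x - g₁ x| ≤ |p x - g₀ x| := by
    obtain ⟨h, h'⟩ := abs_le.1 (hpf x)
    exact abs_sub_max_min_le (by linarith) (by linarith)
  have hg₁f (x : unitInterval) : |g₁ x - f x| ≤ c := by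
    have hc0 : 0 ≤ c := (abs_nonneg _).trans (hpf x)
    have hle : f x - c ≤ g₁ x := le_max_left _ _
    have hge : g₁ x ≤ f x + c := max_le (by linarith) (min_le_left _ _)
    exact abs_le.2 ⟨by linarith, by linarith⟩
  have hcoe (a : ℝ) : volume {x : unitInterval | (x : ℝ) = a} = 0 :=
    Set.Subsingleton.measure_zero (fun x hx y hy => Subtype.ext (hx.trans hy.symm)) _
  obtain ⟨t, ht, htlt, hnull⟩ := exists_forall_measure_add_mul_eq_zero hg₁.measurable
    measurable_subtype_coe hcoe (lt_min (half_pos hr) (sub_pos.2 hc))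
  obtain ⟨htr, htc⟩ := lt_min_iff.1 htlt
  have htilt (x : unitInterval) : |t * (x : ℝ)| ≤ t := by
    rw [abs_of_nonneg (mul_nonneg ht.le x.2.1)]
    exact mul_le_of_le_one_right ht.le x.2.2
  refine ⟨fun x => g₁ x + t * x, by fun_prop, hnull, fun x => ?_,
    (measureReal_mono fun x hx => ?_).trans hg₀p⟩
  · rw [add_sub_right_comm]
    linarith [abs_add_le (g₁ x - f x) (t * x), hg₁f x, htilt x]
  · rw [mem_ofPred_eq, ← sub_sub] at hx
    rw [mem_ofPred_eq]
    linarith [abs_sub (p x - g₁ x) (t * x), hg₁p x, htilt x]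

end NullLevelSets

section ProbabilityIntegralTransform

open ProbabilityTheory

lemma continuous_cdf (μ : Measure ℝ) [IsProbabilityMeasure μ] [NullSingletonClass μ] :
    Continuous (cdf μ) := by
  refine continuous_iff_continuousAt.2 fun a => ?_
  rw [(monotone_cdf μ).continuousAt_iff_leftLim_eq_rightLim, (cdf μ).rightLim_eq]
  refine le_antisymm ((monotone_cdf μ).leftLim_le le_rfl) ?_
  have hatom : (cdf μ).measure {a} = 0 := by rw [measure_cdf, measure_singleton]
  rw [StieltjesFunction.measure_singleton, ENNReal.ofReal_eq_zero] at hatom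
  linarith

lemma exists_cdf_eq {μ : Measure ℝ} [IsProbabilityMeasure μ] [NullSingletonClass μ] {u : ℝ}
    (hu : 0 < u) (hu' : u < 1) : ∃ y, cdf μ y = u := by
  obtain ⟨a, ha⟩ := ((tendsto_cdf_atBot μ).eventually (gt_mem_nhds hu)).exists
  obtain ⟨b, hb⟩ := ((tendsto_cdf_atTop μ).eventually (lt_mem_nhds hu')).exists
  exact mem_range_of_exists_le_of_exists_ge (continuous_cdf μ) ⟨a, ha.le⟩ ⟨b, hb.le⟩

lemma measureReal_cdf_le_eq (μ : Measure ℝ) [IsProbabilityMeasure μ] [NullSingletonClass μ] {u : ℝ}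
    (hu : u ∈ Icc 0 1) : μ.real {y | cdf μ y ≤ u} = u := by
  refine le_antisymm (le_of_forall_gt_imp_ge_of_dense fun v hv => ?_)
    (le_of_forall_lt_imp_le_of_dense fun v hv => ?_)
  · rcases lt_or_ge v 1 with hv1 | hv1
    · obtain ⟨y, rfl⟩ := exists_cdf_eq (μ := μ) (hu.1.trans_lt hv) hv1
      rw [cdf_eq_real μ y]
      exact measureReal_mono fun x hx => ((monotone_cdf μ).reflect_lt (hx.trans_lt hv)).le
    · exact measureReal_le_one.trans hv1
  · rcases lt_or_ge 0 v with hv0 | hv0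
    · obtain ⟨y, rfl⟩ := exists_cdf_eq (μ := μ) hv0 (hv.trans_le hu.2)
      rw [cdf_eq_real μ y]
      exact measureReal_mono fun x hx => (monotone_cdf μ hx).trans hv.le
    · exact hv0.trans measureReal_nonneg

/-- The cumulative distribution function of `μ` with values in `unitInterval`. -/
def cdfUnit (μ : Measure ℝ) (y : ℝ) : unitInterval := ⟨cdf μ y, cdf_nonneg μ y, cdf_le_one μ y⟩

lemma continuous_cdfUnit (μ : Measure ℝ) [IsProbabilityMeasure μ] [NullSingletonClass μ] :
    Continuous (cdfUnit μ) := (continuous_cdf μ).subtype_mk _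

lemma measurePreserving_cdfUnit (μ : Measure ℝ) [IsProbabilityMeasure μ] [NullSingletonClass μ] :
    MeasurePreserving (cdfUnit μ) μ volume := by
  have hmeas := (continuous_cdfUnit μ).measurable
  have := Measure.isProbabilityMeasure_map (μ := μ) hmeas.aemeasurable
  refine ⟨hmeas, Measure.ext_of_Iic _ _ fun u => ?_⟩
  rw [Measure.map_apply hmeas measurableSet_Iic, unitInterval.volume_Iic, ← ofReal_measureReal]
  exact congrArg _ (measureReal_cdf_le_eq μ u.2)

lemma exists_measurePreserving_coe_eq_measureReal_le {Ω : Type*} [TopologicalSpace Ω]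
    [MeasurableSpace Ω] [OpensMeasurableSpace Ω] {μ : Measure Ω} [IsProbabilityMeasure μ]
    {g : Ω → ℝ} (hg : Continuous g) (hnull : ∀ a, μ {x | g x = a} = 0) :
    ∃ G : C(Ω, unitInterval), MeasurePreserving G μ volume ∧
      ∀ x, (G x : ℝ) = μ.real {y | g y ≤ g x} := by
  have hgm := hg.measurable
  have := Measure.isProbabilityMeasure_map (μ := μ) hgm.aemeasurable
  have : NullSingletonClass (μ.map g) :=
    ⟨fun a => (Measure.map_apply hgm (measurableSet_singleton a)).trans (hnull a)⟩
  refine ⟨⟨cdfUnit (μ.map g) ∘ g, (continuous_cdfUnit _).comp hg⟩,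
    (measurePreserving_cdfUnit _).comp (hgm.measurePreserving μ), fun x => ?_⟩
  exact (cdf_eq_real _ _).trans (map_measureReal_apply hgm measurableSet_Iic)

end ProbabilityIntegralTransform

section Rank

lemma measureReal_coe_le_le {t : ℝ} (ht : 0 ≤ t) :
    volume.real {u : unitInterval | (u : ℝ) ≤ t} ≤ t := by
  rcases le_total t 1 with ht1 | ht1
  · have hvol := unitInterval.volume_Iic ⟨t, ht, ht1⟩
    exact (congrArg ENNReal.toReal hvol).trans_le (ENNReal.toReal_ofReal ht).le
  · exact measureReal_le_one.trans ht1

lemma le_measureReal_coe_le {t : ℝ} (ht : t ≤ 1) :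
    t ≤ volume.real {u : unitInterval | (u : ℝ) ≤ t} := by
  rcases le_total 0 t with ht0 | ht0
  · have hvol := unitInterval.volume_Iic ⟨t, ht0, ht⟩
    exact (ENNReal.toReal_ofReal ht0).ge.trans_eq (congrArg ENNReal.toReal hvol).symm
  · exact ht0.trans measureReal_nonneg

variable {Ω : Type*} [MeasurableSpace Ω] {μ : Measure Ω} [IsFiniteMeasure μ] {g : Ω → ℝ}

lemma abs_measureReal_le_sub_le {f : Ω → unitInterval} (hf : MeasurePreserving f μ volume) {c : ℝ}
    (hgf : ∀ y, |g y - f y| ≤ c) (x : Ω) : |μ.real {y | g y ≤ g x} - f x| ≤ 2 * c := by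
  have hc : 0 ≤ c := (abs_nonneg _).trans (hgf x)
  obtain ⟨hx, hx'⟩ := abs_le.1 (hgf x)
  have hlevel (t : ℝ) : μ.real {y | (f y : ℝ) ≤ t} = volume.real {u : unitInterval | (u : ℝ) ≤ t} :=
    hf.measureReal_preimage (measurable_subtype_coe measurableSet_Iic).nullMeasurableSet
  have hupper : {y | g y ≤ g x} ⊆ {y | (f y : ℝ) ≤ f x + 2 * c} := fun y hy => by
    rw [mem_ofPred_eq] at hy ⊢
    linarith [(abs_le.1 (hgf y)).1]
  have hlower : {y | (f y : ℝ) ≤ f x - 2 * c} ⊆ {y | g y ≤ g x} := fun y hy => by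
    rw [mem_ofPred_eq] at hy ⊢
    linarith [(abs_le.1 (hgf y)).2]
  have hle := (measureReal_mono (μ := μ) hupper).trans_eq (hlevel _)
  have hge := (hlevel _).symm.trans_le (measureReal_mono (μ := μ) hlower)
  rw [abs_sub_le_iff]
  constructor
  · linarith [measureReal_coe_le_le (t := f x + 2 * c) (by linarith [(f x).2.1])]
  · linarith [le_measureReal_coe_le (t := f x - 2 * c) (by linarith [(f x).2.2])]

lemma measureReal_le_mem_Icc {A : Type*} [LinearOrder A] {τ : Ω → A} {B : Set Ω}
    (hlt : ∀ x ∉ B, ∀ y ∉ B, τ y < τ x → g y < g x) {x : Ω} (hx : x ∉ B) :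
    μ.real {y | g y ≤ g x} ∈
      Icc (μ.real {y | τ y < τ x} - μ.real B) (μ.real {y | τ y ≤ τ x} + μ.real B) := by
  have hlower : {y | τ y < τ x} ⊆ {y | g y ≤ g x} ∪ B := fun y hy =>
    or_iff_not_imp_right.2 fun hyB => (hlt x hx y hyB hy).le
  have hupper : {y | g y ≤ g x} ⊆ {y | τ y ≤ τ x} ∪ B := fun y hy =>
    or_iff_not_imp_right.2 fun hyB => not_lt.1 fun h => (hlt y hyB x hx h).not_ge hy
  exact ⟨sub_le_iff_le_add.2 ((measureReal_mono hlower).trans (measureReal_union_le _ _)),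
    (measureReal_mono hupper).trans (measureReal_union_le _ _)⟩

end Rank

section NearPermutations

variable {M : ℕ} {η : ℝ}

/-- The points within distance `η` of an endpoint `j / (M + 1)` of one of the intervals indexed by
`cell M`. -/
def nearGrid (M : ℕ) (η : ℝ) : Set unitInterval :=
  ⋃ j : Fin (M + 2), Subtype.val ⁻¹' Metric.closedBall (j / (M + 1) : ℝ) η

lemma measurableSet_nearGrid (M : ℕ) (η : ℝ) : MeasurableSet (nearGrid M η) :=
  .iUnion fun _ => measurable_subtype_coe Metric.isClosed_closedBall.measurableSet

lemma measureReal_nearGrid_le (M : ℕ) (hη : 0 ≤ η) :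
    volume.real (nearGrid M η) ≤ (M + 2) * (2 * η) := by
  have hball (a : ℝ) :
      volume.real (Subtype.val ⁻¹' Metric.closedBall a η : Set unitInterval) ≤ 2 * η := by
    refine ENNReal.toReal_le_of_le_ofReal (by positivity) ?_
    rw [unitInterval.volume_apply, ← Real.volume_closedBall]
    exact measure_mono (image_preimage_subset _ _)
  calc volume.real (nearGrid M η)
      ≤ ∑ j : Fin (M + 2), volume.real
          (Subtype.val ⁻¹' Metric.closedBall (j / (M + 1) : ℝ) η : Set unitInterval) :=
        measureReal_iUnion_fintype_le _
    _ ≤ ∑ _j : Fin (M + 2), 2 * η := Finset.sum_le_sum fun j _ => hball _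
    _ = (M + 2) * (2 * η) := by simp

lemma cell_eq_of_notMem_nearGrid {u : unitInterval} {i : Fin (M + 1)} (hu : u ∉ nearGrid M η)
    (hi : (u : ℝ) ∈ Icc (i / (M + 1) - η : ℝ) ((i + 1) / (M + 1) + η)) : cell M u = i := by
  have hM : (0 : ℝ) < M + 1 := by positivity
  simp only [nearGrid, mem_iUnion, mem_preimage, Metric.mem_closedBall, Real.dist_eq,
    not_exists, not_le, lt_abs] at hu
  have hleft := hu i.castSucc
  have hright := hu i.succ
  rw [Fin.val_castSucc] at hleft
  rw [Fin.val_succ, Nat.cast_add_one] at hright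
  obtain ⟨hi, hi'⟩ := hi
  refine cell_eq_of_le_of_lt ((div_le_iff₀' hM).1 ?_) ((lt_div_iff₀' hM).1 ?_)
  · rcases hleft with h | h <;> linarith
  · rcases hright with h | h <;> linarith

lemma measureReal_perm_cell_mem (σ : Equiv.Perm (Fin (M + 1))) (S : Finset (Fin (M + 1))) :
    volume.real {x | σ (cell M x) ∈ S} = S.card / (M + 1) := by
  rw [← S.card_map σ.symm.toEmbedding, ← measureReal_cell_preimage]
  congr 1
  ext x
  simp

lemma measureReal_cell_ne_perm_le {G : unitInterval → unitInterval} (hG : MeasurePreserving G)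
    {g : unitInterval → ℝ} (hGg : ∀ x, (G x : ℝ) = volume.real {y | g y ≤ g x})
    {σ : Equiv.Perm (Fin (M + 1))} {B : Set unitInterval} (hB : volume.real B ≤ η)
    (hlt : ∀ x ∉ B, ∀ y ∉ B, σ (cell M y) < σ (cell M x) → g y < g x) :
    volume.real {x | cell M (G x) ≠ σ (cell M x)} ≤ (2 * M + 5) * η := by
  have hbelow (i : Fin (M + 1)) : volume.real {y | σ (cell M y) < i} = i / (M + 1) := by
    simpa only [Finset.mem_Iio, Fin.card_Iio] using measureReal_perm_cell_mem σ (Finset.Iio i)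
  have hupto (i : Fin (M + 1)) : volume.real {y | σ (cell M y) ≤ i} = (i + 1) / (M + 1) := by
    simpa only [Finset.mem_Iic, Fin.card_Iic, Nat.cast_add_one] using
      measureReal_perm_cell_mem σ (Finset.Iic i)
  have hsub : {x | cell M (G x) ≠ σ (cell M x)} ⊆ B ∪ G ⁻¹' nearGrid M η := fun x hx => by
    by_contra hxn
    obtain ⟨hxB, hxgrid⟩ := not_or.1 hxn
    obtain ⟨hlower, hupper⟩ := measureReal_le_mem_Icc (μ := volume) hlt hxB
    rw [← hGg, hbelow] at hlower
    rw [← hGg, hupto] at hupper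
    exact hx (cell_eq_of_notMem_nearGrid hxgrid ⟨by linarith, by linarith⟩)
  calc volume.real {x | cell M (G x) ≠ σ (cell M x)}
      ≤ volume.real B + volume.real (G ⁻¹' nearGrid M η) :=
        (measureReal_mono hsub).trans (measureReal_union_le _ _)
    _ ≤ η + (M + 2) * (2 * η) := by
        rw [hG.measureReal_preimage (measurableSet_nearGrid M η).nullMeasurableSet]
        exact add_le_add hB (measureReal_nearGrid_le M (measureReal_nonneg.trans hB))
    _ = (2 * M + 5) * η := by ring

lemma exists_measurePreserving_near_perm {f : C(unitInterval, unitInterval)}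
    (hf : MeasurePreserving f) (σ : Equiv.Perm (Fin (M + 1))) {c c' : ℝ}
    (hσ : ∀ x, |(σ (cell M x) + 1 / 2) / (M + 1) - (f x : ℝ)| ≤ c) (hc : c < c') (hη : 0 < η) :
    ∃ G : C(unitInterval, unitInterval), MeasurePreserving G ∧
      (∀ x, dist (G x) (f x) ≤ 2 * c') ∧
      volume.real {x | cell M (G x) ≠ σ (cell M x)} ≤ η := by
  have hM : (0 : ℝ) < M + 1 := by positivity
  let p : unitInterval → ℝ := fun x => (σ (cell M x) + 1 / 2) / (M + 1)
  have hp : Integrable p :=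
    integrable_comp_of_finite (measurable_cell M) fun i => ((σ i : ℝ) + 1 / 2) / (M + 1)
  obtain ⟨g, hg, hnull, hgf, hgp⟩ := exists_continuous_nullLevel_approx
    (continuous_subtype_val.comp f.continuous) hp hσ hc
    (r := 1 / (2 * (M + 1))) (η := η / (2 * M + 5)) (by positivity) (by positivity)
  obtain ⟨G, hG, hGg⟩ := exists_measurePreserving_coe_eq_measureReal_le hg hnull
  refine ⟨G, hG, fun x => ?_,
    (measureReal_cell_ne_perm_le hG hGg hgp fun x hx y hy hlt => ?_).trans_eq
      (mul_div_cancel₀ η (by positivity))⟩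
  · rw [Subtype.dist_eq, Real.dist_eq, hGg]
    exact abs_measureReal_le_sub_le hf hgf x
  · have hstep : (σ (cell M y) : ℝ) + 1 ≤ σ (cell M x) := by exact_mod_cast hlt
    have hgap : p y + 2 * (1 / (2 * (M + 1))) ≤ p x := by
      simp only [p]
      field_simp
      linarith
    rw [mem_ofPred_eq, not_le] at hx hy
    linarith [(abs_lt.1 hx).2, (abs_lt.1 hy).1]

end NearPermutations

section Density

lemma abs_center_sub_le {M : ℕ} {u : unitInterval} :
    |((cell M u : ℝ) + 1 / 2) / (M + 1) - u| ≤ 1 / (M + 1) := by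
  have hM : (0 : ℝ) < M + 1 := by positivity
  rw [div_sub' hM.ne', abs_div, abs_of_pos hM]
  gcongr
  rw [abs_le]
  constructor <;> linarith [coe_cell_le M u, le_coe_cell_add_one M u]

lemma exists_perm_abs_center_sub_le {f : unitInterval → unitInterval} (hf : MeasurePreserving f)
    {M : ℕ} {d : ℝ} (hM : 1 / ((M : ℝ) + 1) ≤ d)
    (hfd : ∀ x y, cell M x = cell M y → dist (f x) (f y) ≤ d) :
    ∃ σ : Equiv.Perm (Fin (M + 1)), ∀ x,
      |(σ (cell M x) + 1 / 2) / (M + 1) - (f x : ℝ)| ≤ 2 * d := by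
  obtain ⟨σ, hσ⟩ := exists_perm_forall_exists_mem_fiber (measurable_cell M)
    (by positivity) measureReal_cell_fiber hf
  refine ⟨σ, fun x => ?_⟩
  obtain ⟨y, hyx, hy⟩ := hσ (cell M x)
  rw [← hy]
  calc |((cell M (f y) : ℝ) + 1 / 2) / (M + 1) - f x|
      ≤ |((cell M (f y) : ℝ) + 1 / 2) / (M + 1) - f y| + |(f y : ℝ) - f x| := abs_sub_le _ _ _
    _ ≤ d + d := add_le_add (abs_center_sub_le.trans hM) (hfd y x hyx)
    _ = 2 * d := (two_mul d).symm

lemma exists_forall_cell_eq_imp_dist_le {f : unitInterval → unitInterval} (hf : Continuous f)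
    (N : ℕ) {d : ℝ} (hd : 0 < d) :
    ∃ M ≥ N, 1 / ((M : ℝ) + 1) ≤ d ∧ ∀ x y, cell M x = cell M y → dist (f x) (f y) ≤ d := by
  obtain ⟨ρ, hρ, hfρ⟩ := Metric.uniformContinuous_iff.1
    (CompactSpace.uniformContinuous_of_continuous hf) d hd
  obtain ⟨M, hNM, hM⟩ := ((Filter.eventually_ge_atTop N).and
    (tendsto_one_div_add_atTop_nhds_zero_nat.eventually (gt_mem_nhds (lt_min hρ hd)))).exists
  obtain ⟨hMρ, hMd⟩ := lt_min_iff.1 hM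
  exact ⟨M, hNM, hMd.le, fun x y h => (hfρ ((dist_le_of_cell_eq h).trans_lt hMρ)).le⟩

lemma exists_forall_entropyRate_cell_lt (M : ℕ) {ε : ℝ} (hε : 0 < ε) :
    ∃ η > 0, ∀ G : unitInterval → unitInterval, MeasurePreserving G →
      ∀ φ : Fin (M + 1) → Fin (M + 1), volume.real {x | cell M (G x) ≠ φ (cell M x)} ≤ η →
        entropyRate volume G (cell M) < ε := by
  have hε3 : 0 < ε / 3 := by positivity
  obtain ⟨η, hη, hηmul⟩ := exists_pos_forall_mul_le
    (Real.log (Fintype.card (Fin (M + 1)) / (1 - Real.exp (-(ε / 3))))) hε3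
  refine ⟨η, hη, fun G hG φ hφ => ?_⟩
  linarith [entropyRate_le_fano hG (measurable_cell M) φ hε3, hηmul _ measureReal_nonneg hφ]

lemma dense_iUnion_entropyRate_cell_lt (N : ℕ) {ε : ℝ} (hε : 0 < ε) :
    Dense (⋃ M ≥ N, {f : CLam | entropyRate volume f.1 (cell M) < ε}) := by
  refine Metric.dense_iff.2 fun f δ hδ => ?_
  have hδ7 : 0 < δ / 7 := by positivity
  obtain ⟨M, hNM, hM, hfd⟩ := exists_forall_cell_eq_imp_dist_le f.1.continuous N hδ7
  obtain ⟨σ, hσ⟩ := exists_perm_abs_center_sub_le f.2 hM hfd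
  obtain ⟨η, hη, hent⟩ := exists_forall_entropyRate_cell_lt M hε
  obtain ⟨G, hG, hGf, hGσ⟩ := exists_measurePreserving_near_perm f.2 σ hσ
    (c' := 3 * (δ / 7)) (by linarith) hη
  refine ⟨⟨G, hG⟩, ?_, mem_iUnion₂.2 ⟨M, hNM, hent G hG σ hGσ⟩⟩
  calc dist G f.1 ≤ 2 * (3 * (δ / 7)) := (ContinuousMap.dist_le (by positivity)).2 hGf
    _ < δ := by linarith

end Density

section Baire

lemma isClosed_setOf_measurePreserving {X Y : Type*} [TopologicalSpace X] [CompactSpace X]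
    [MeasurableSpace X] [BorelSpace X] [PseudoMetricSpace Y] [MeasurableSpace Y] [BorelSpace Y]
    (μ : Measure X) [IsFiniteMeasure μ] (ν : Measure Y) [IsFiniteMeasure ν] :
    IsClosed {f : C(X, Y) | MeasurePreserving f μ ν} := by
  have hchar : {f : C(X, Y) | MeasurePreserving f μ ν} =
      ⋂ u : BoundedContinuousFunction Y ℝ, {f : C(X, Y) | ∫ x, u (f x) ∂μ = ∫ y, u y ∂ν} := by
    ext f
    have hf := f.continuous.measurable
    have hmap (u : BoundedContinuousFunction Y ℝ) : ∫ y, u y ∂(μ.map f) = ∫ x, u (f x) ∂μ :=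
      integral_map hf.aemeasurable u.continuous.aestronglyMeasurable
    simp only [mem_iInter, mem_ofPred_eq]
    refine ⟨fun h u => by rw [← hmap, h.map_eq], fun h => ⟨hf, ?_⟩⟩
    exact ext_of_forall_integral_eq_of_IsFiniteMeasure fun u => (hmap u).trans (h u)
  rw [hchar]
  refine isClosed_iInter fun u => isClosed_eq ?_ continuous_const
  refine continuous_of_dominated (bound := fun _ => ‖u‖)
    (fun f => (u.continuous.comp f.continuous).aestronglyMeasurable)
    (fun f => .of_forall fun x => u.norm_coe_le_norm _) (integrable_const _)
    (.of_forall fun x => u.continuous.comp (ContinuousEvalConst.continuous_eval_const x))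

lemma completeSpace_cLam : CompleteSpace CLam :=
  (isClosed_setOf_measurePreserving volume volume).isComplete.completeSpace_coe

end Baire

/-- The set of maps in `C_λ` with zero measure-theoretic entropy with respect to
Lebesgue measure is a dense `G_δ` subset of `C_λ` in the uniform topology. -/
theorem stmt0 :
    IsGδ {f : CLam | hLam ⇑f.1 = 0} ∧ Dense {f : CLam | hLam ⇑f.1 = 0} := by
  let U (N : ℕ) : Set CLam :=
    ⋃ M ≥ N, {f | entropyRate volume f.1 (cell M) < 1 / ((N : ℝ) + 1)}
  have hzero : {f : CLam | hLam ⇑f.1 = 0} = ⋂ N, U N := by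
    ext f
    simp only [U, mem_ofPred_eq, mem_iInter, mem_iUnion, exists_prop]
    exact hLam_eq_zero_iff_cell f.2
  have hopen (N : ℕ) : IsOpen (U N) := isOpen_biUnion fun M _ =>
    (upperSemicontinuous_entropyRate (measurable_cell M)).isOpen_preimage _
  have hdense (N : ℕ) : Dense (U N) := dense_iUnion_entropyRate_cell_lt N (by positivity)
  have := completeSpace_cLam
  rw [hzero]
  exact ⟨.iInter_of_isOpen hopen, dense_iInter_of_isOpen hopen hdense⟩

end
end

section
/- The set of piecewise affine maps in C_λ all of whose determining values are rational is dense in C_λ with respect to the uniform metric. -/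
open MeasureTheory Set
open scoped ENNReal

noncomputable section

/-- The extension of `f : [0,1] → [0,1]` to a real function (constant outside `[0,1]`),
used to speak about (one-sided) differentiability of `f` within `[0,1]`. -/
def extMap (f : C(unitInterval, unitInterval)) : ℝ → ℝ :=
  fun x => (f (Set.projIcc 0 1 zero_le_one x) : ℝ)

/-- `f` is piecewise affine: there are `0 = t₀ < t₁ < ⋯ < t_m = 1` such that `f` is
affine on each `[t_j, t_{j+1}]`. -/
def PiecewiseAffineMap (f : C(unitInterval, unitInterval)) : Prop :=
  ∃ (m : ℕ) (t : Fin (m + 1) → unitInterval), StrictMono t ∧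
    t 0 = 0 ∧ t (Fin.last m) = 1 ∧
    ∀ j : Fin m, ∃ c d : ℝ, ∀ x : unitInterval,
      t j.castSucc ≤ x → x ≤ t j.succ → (f x : ℝ) = c * (x : ℝ) + d

/-- `c` is a determining value of `f`: either a critical value (the value at a local
maximum or local minimum) or the value of `f` at a point where the derivative of `f`
(within `[0,1]`) does not exist. -/
def IsDeterminingValue (f : C(unitInterval, unitInterval)) (c : ℝ) : Prop :=
  ∃ x : unitInterval, (f x : ℝ) = c ∧
    (IsLocalMax f x ∨ IsLocalMin f x ∨
      ¬ DifferentiableWithinAt ℝ (extMap f) (Set.Icc 0 1) (x : ℝ))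

/-! Cut `[0, 1]` into time intervals on which `f` oscillates by at most `1 / N`, and the range into
the `N` levels `(k / N, (k + 1) / N]`. On each time interval, replace `f` by a piecewise affine path
between grid points that spends in each level exactly the time `f` spends there, crossing the levels
at constant speed: descend to the lowest grid point, climb to the highest, descend to the end point,
dividing the time available for a level equally among its crossings. Each level inside the range of
`f` on the interval is visited for a positive time, so this is possible. The occupation measure of
the glued path is the average of that of `f`, that is of Lebesgue measure, over the levels; it is
therefore Lebesgue measure. All the knots have values in `{k / N}`, and all slopes are nonzero, so
that the determining values are among the values at the knots. -/

open scoped ProbabilityTheory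

section PiecewiseAffine

/-- `h` is piecewise affine on `[a, b]`, with nonzero slopes and with values in `V` at the knots,
which include `a` and `b`. -/
inductive PiecewiseAffineOn (V : Set ℝ) (h : ℝ → ℝ) (a : ℝ) : ℝ → Prop
  | refl : h a ∈ V → PiecewiseAffineOn V h a a
  | snoc {b c α β : ℝ} : PiecewiseAffineOn V h a b → b < c → α ≠ 0 →
      EqOn h (fun x => α * x + β) (Icc b c) → h c ∈ V → PiecewiseAffineOn V h a c

namespace PiecewiseAffineOn

variable {V : Set ℝ} {h h' : ℝ → ℝ} {a b c : ℝ}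

theorem le (H : PiecewiseAffineOn V h a b) : a ≤ b := by
  induction H with
  | refl => exact le_rfl
  | snoc _ hbc _ _ _ ih => exact ih.trans hbc.le

theorem trans (H : PiecewiseAffineOn V h a b) (H' : PiecewiseAffineOn V h b c) :
    PiecewiseAffineOn V h a c := by
  induction H' with
  | refl => exact H
  | snoc _ hlt hα heq hV ih => exact ih.snoc hlt hα heq hV

theorem congr (H : PiecewiseAffineOn V h a b) (heq : EqOn h h' (Icc a b)) :
    PiecewiseAffineOn V h' a b := by
  induction H with
  | refl hV => exact refl (heq ⟨le_rfl, le_rfl⟩ ▸ hV)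
  | snoc H hlt hα hafn hV ih =>
    refine (ih (heq.mono (Icc_subset_Icc_right hlt.le))).snoc hlt hα
      ((heq.mono (Icc_subset_Icc_left H.le)).symm.trans hafn) ?_
    exact heq ⟨H.le.trans hlt.le, le_rfl⟩ ▸ hV

theorem mem_or_hasDerivAt (H : PiecewiseAffineOn V h a b) {x : ℝ} (hx : x ∈ Icc a b) :
    h x ∈ V ∨ ∃ α ≠ 0, HasDerivAt h α x := by
  induction H with
  | refl hV =>
    obtain rfl : x = a := le_antisymm hx.2 hx.1
    exact .inl hV
  | @snoc b c α β _ hlt hα hafn hV ih =>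
    rcases le_or_gt x b with hxb | hxb
    · exact ih ⟨hx.1, hxb⟩
    rcases hx.2.eq_or_lt with rfl | hxc
    · exact .inl hV
    have hderiv : HasDerivAt (fun x => α * x + β) α x := by
      simpa using! ((hasDerivAt_id x).const_mul α).add_const β
    exact .inr ⟨α, hα, hderiv.congr_of_eventuallyEq
      (hafn.eventuallyEq_of_mem (Icc_mem_nhds hxb hxc))⟩

theorem exists_partition (H : PiecewiseAffineOn V h a b) :
    ∃ (m : ℕ) (t : Fin (m + 1) → ℝ), StrictMono t ∧ t 0 = a ∧ t (Fin.last m) = b ∧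
      ∀ j : Fin m, ∃ c d : ℝ, EqOn h (fun x => c * x + d) (Icc (t j.castSucc) (t j.succ)) := by
  induction H with
  | refl => exact ⟨0, fun _ => a, fun i j hij => by omega, rfl, rfl, fun j => j.elim0⟩
  | @snoc b c α β _ hlt _ hafn _ ih =>
    obtain ⟨m, t, ht, rfl, rfl, hpiece⟩ := ih
    refine ⟨m + 1, Fin.snoc t c, ?_, ?_, Fin.snoc_last .., fun i => ?_⟩
    · rw [Fin.strictMono_iff_lt_succ]
      intro i
      induction i using Fin.lastCases with
      | last => simpa using hlt
      | cast i =>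
        rw [Fin.succ_castSucc, Fin.snoc_castSucc, Fin.snoc_castSucc]
        exact ht Fin.castSucc_lt_succ
    · rw [← Fin.castSucc_zero, Fin.snoc_castSucc]
    · induction i using Fin.lastCases with
      | last => exact ⟨α, β, by simpa using hafn⟩
      | cast i =>
        rw [Fin.succ_castSucc, Fin.snoc_castSucc, Fin.snoc_castSucc]
        exact hpiece i

end PiecewiseAffineOn

end PiecewiseAffine

section ExtMap

variable (f : C(unitInterval, unitInterval))

theorem continuous_extMap : Continuous (extMap f) :=
  continuous_subtype_val.comp (f.continuous.comp continuous_projIcc)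

theorem extMap_coe (x : unitInterval) : extMap f x = f x := by
  rw [extMap, projIcc_val]

theorem extMap_mem_Icc (x : ℝ) : extMap f x ∈ Icc (0 : ℝ) 1 :=
  (f _).2

theorem measurePreserving_extMap_iff :
    MeasurePreserving (extMap f) (volume.restrict (Icc 0 1)) (volume.restrict (Icc 0 1)) ↔
      MeasurePreserving f volume volume := by
  have hcoe : MeasurePreserving ((↑) : unitInterval → ℝ) volume (volume.restrict (Icc 0 1)) :=
    unitInterval.measurePreserving_coe
  have hsemi : Function.Semiconj ((↑) : unitInterval → ℝ) f (extMap f) :=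
    fun x => (extMap_coe f x).symm
  refine ⟨fun hf => ⟨f.continuous.measurable, ?_⟩,
    fun hf => hcoe.of_semiconj hf hsemi (continuous_extMap f).measurable⟩
  apply unitInterval.measurableEmbedding_coe.map_injective
  rw [Measure.map_map hcoe.measurable f.continuous.measurable, hsemi.comp_eq,
    (hf.comp hcoe).map_eq, hcoe.map_eq]

theorem exists_eqOn_extMap {h : ℝ → ℝ} (hcont : Continuous h)
    (hmaps : MapsTo h (Icc 0 1) (Icc 0 1)) :
    ∃ g : C(unitInterval, unitInterval), EqOn h (extMap g) (Icc 0 1) :=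
  ⟨⟨hmaps.restrict, hcont.continuousOn.mapsToRestrict hmaps⟩,
    fun x hx => (extMap_coe ⟨hmaps.restrict, _⟩ ⟨x, hx⟩).symm⟩

variable {f} {V : Set ℝ}

theorem PiecewiseAffineOn.piecewiseAffineMap (H : PiecewiseAffineOn V (extMap f) 0 1) :
    PiecewiseAffineMap f := by
  obtain ⟨m, t, ht, ht0, ht1, hpiece⟩ := H.exists_partition
  have hmem (i) : t i ∈ Icc (0 : ℝ) 1 :=
    ⟨ht0 ▸ ht.monotone (Fin.zero_le i), ht1 ▸ ht.monotone (Fin.le_last i)⟩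
  refine ⟨m, fun i => ⟨t i, hmem i⟩, ht, Subtype.ext ht0, Subtype.ext ht1, fun j => ?_⟩
  obtain ⟨c, d, hcd⟩ := hpiece j
  exact ⟨c, d, fun x hx hx' => extMap_coe f x ▸ hcd ⟨hx, hx'⟩⟩

theorem PiecewiseAffineOn.mem_of_isDeterminingValue (H : PiecewiseAffineOn V (extMap f) 0 1)
    {c : ℝ} (hc : IsDeterminingValue f c) : c ∈ V := by
  obtain ⟨x, rfl, hx⟩ := hc
  rw [← extMap_coe f x]
  refine (H.mem_or_hasDerivAt x.2).resolve_right ?_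
  rintro ⟨α, hα, hderiv⟩
  have not_extr : ¬ IsLocalExtr f x := fun hextr => by
    have hextr' : IsLocalExtr (extMap f) x :=
      (IsLocalExtr.comp_continuous (b := (x : ℝ)) (g := projIcc 0 1 zero_le_one)
        ((projIcc_val zero_le_one x).symm ▸ hextr)
        continuous_projIcc.continuousAt).comp_mono (Subtype.mono_coe _)
    exact hα (hextr'.hasDerivAt_eq_zero hderiv)
  rcases hx with hmax | hmin | hdiff
  · exact not_extr hmax.isExtr
  · exact not_extr hmin.isExtr
  · exact hdiff hderiv.differentiableAt.differentiableWithinAt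

end ExtMap

section LevelAverage

theorem measure_smul_cond {Ω : Type*} [MeasurableSpace Ω] (μ : Measure Ω) {s : Set Ω}
    (hs : μ s ≠ ∞) : μ s • μ[|s] = μ.restrict s := by
  rcases eq_or_ne (μ s) 0 with h0 | h0
  · rw [h0, zero_smul, Measure.restrict_eq_zero.2 h0]
  · rw [ProbabilityTheory.cond, smul_smul, ENNReal.mul_inv_cancel h0 hs, one_smul]

section Ioc

variable {α : Type*} [LinearOrder α] [TopologicalSpace α] [OrderClosedTopology α]
  [MeasurableSpace α] [OpensMeasurableSpace α] {y : ℕ → α}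

theorem restrict_Ioc_add_restrict_Ioc {a b c : α} (μ : Measure α) (hab : a ≤ b) (hbc : b ≤ c) :
    μ.restrict (Ioc a b) + μ.restrict (Ioc b c) = μ.restrict (Ioc a c) := by
  rw [← Ioc_union_Ioc_eq_Ioc hab hbc,
    Measure.restrict_union (Ioc_disjoint_Ioc_of_le le_rfl) measurableSet_Ioc]

theorem restrict_Ioc_eq_sum (hy : Monotone y) (μ : Measure α) (p q : ℕ) :
    μ.restrict (Ioc (y p) (y q)) =
      ∑ k ∈ Finset.Ico p q, μ.restrict (Ioc (y k) (y (k + 1))) := by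
  have hunion : ⋃ k ∈ Finset.Ico p q, Ioc (y k) (y (k + 1)) = Ioc (y p) (y q) := by
    simpa only [Finset.mem_Ico, ← mem_Ico] using! hy.biUnion_Ico_Ioc_map_succ p q
  have hdisj : Pairwise (Function.onFun Disjoint fun k => Ioc (y k) (y (k + 1))) :=
    hy.pairwise_disjoint_on_Ioc_succ
  rw [← hunion, Measure.restrict_biUnion_finset (hdisj.set_pairwise _)
    fun _ => measurableSet_Ioc, Measure.sum_fintype,
    Finset.sum_coe_sort _ fun k => μ.restrict (Ioc (y k) (y (k + 1)))]

theorem measureReal_Ioc_eq_sum (hy : Monotone y) (μ : Measure α) [IsFiniteMeasure μ] (p q : ℕ) :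
    μ.real (Ioc (y p) (y q)) = ∑ k ∈ Finset.Ico p q, μ.real (Ioc (y k) (y (k + 1))) := by
  rw [← measureReal_restrict_apply_univ, restrict_Ioc_eq_sum hy, measureReal_def,
    Measure.finsetSum_apply, ENNReal.toReal_sum fun _ _ => measure_ne_top _ _]
  simp only [Measure.restrict_apply_univ, measureReal_def]

end Ioc

variable {y : ℕ → ℝ}

/-- The measure that has the same mass as `μ` on each of the levels `(y k, y (k + 1)]`, `k < n`, and
is uniformly distributed on each of them. -/
def levelAverage (y : ℕ → ℝ) (n : ℕ) (μ : Measure ℝ) : Measure ℝ :=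
  ∑ k ∈ Finset.range n, μ (Ioc (y k) (y (k + 1))) • volume[|Ioc (y k) (y (k + 1))]

theorem levelAverage_zero (n : ℕ) : levelAverage y n 0 = 0 := by
  simp [levelAverage]

theorem levelAverage_add (n : ℕ) (μ ν : Measure ℝ) :
    levelAverage y n (μ + ν) = levelAverage y n μ + levelAverage y n ν := by
  simp only [levelAverage, Measure.add_apply, add_smul, Finset.sum_add_distrib]

theorem levelAverage_restrict_Ioc (hy : Monotone y) (μ : Measure ℝ) {p q n : ℕ} (hqn : q ≤ n) :
    levelAverage y n (μ.restrict (Ioc (y p) (y q))) =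
      ∑ k ∈ Finset.Ico p q, μ (Ioc (y k) (y (k + 1))) • volume[|Ioc (y k) (y (k + 1))] := by
  have hsub : Finset.Ico p q ⊆ Finset.range n := fun k hk =>
    Finset.mem_range.2 ((Finset.mem_Ico.1 hk).2.trans_le hqn)
  rw [levelAverage, ← Finset.sum_subset hsub]
  · refine Finset.sum_congr rfl fun k hk => ?_
    obtain ⟨hpk, hkq⟩ := Finset.mem_Ico.1 hk
    rw [Measure.restrict_eq_self μ (Ioc_subset_Ioc (hy hpk) (hy hkq))]
  · intro k _ hk
    have hdisj : Disjoint (Ioc (y k) (y (k + 1))) (Ioc (y p) (y q)) := by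
      rcases lt_or_ge k p with hkp | hpk
      · exact Ioc_disjoint_Ioc_of_le (hy hkp)
      · have hqk : q ≤ k := not_lt.1 fun hkq => hk (Finset.mem_Ico.2 ⟨hpk, hkq⟩)
        exact (Ioc_disjoint_Ioc_of_le (hy hqk)).symm
    rw [Measure.restrict_apply measurableSet_Ioc, hdisj.inter_eq, measure_empty, zero_smul]

theorem levelAverage_volume_restrict_Ioc (hy : Monotone y) (n : ℕ) :
    levelAverage y n (volume.restrict (Ioc (y 0) (y n))) = volume.restrict (Ioc (y 0) (y n)) := by
  rw [levelAverage_restrict_Ioc hy _ le_rfl, restrict_Ioc_eq_sum hy]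
  exact Finset.sum_congr rfl fun k _ => measure_smul_cond _ measure_Ioc_lt_top.ne

end LevelAverage

section Zigzag

/-- `h` is a continuous path from `(a, y v)` to `(b, y w)` with graph over `[a, b]` in the tube `T`,
piecewise affine with knots at the heights `y k` and with occupation measure `μ`. -/
structure IsZigzag (y : ℕ → ℝ) (T : ℝ → Set ℝ) (a b : ℝ) (v w : ℕ) (μ : Measure ℝ) (h : ℝ → ℝ) :
    Prop where
  continuous : Continuous h
  left : h a = y v
  right : h b = y w
  piecewiseAffineOn : PiecewiseAffineOn (range y) h a b
  mem_tube : ∀ x ∈ Icc a b, h x ∈ T x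
  map_eq : (volume.restrict (Ioc a b)).map h = μ

/-- Existence of a zigzag path with the given tube, end points and occupation measure. -/
def ZigzagJoined (y : ℕ → ℝ) (T : ℝ → Set ℝ) (a b : ℝ) (v w : ℕ) (μ : Measure ℝ) : Prop :=
  ∃ h, IsZigzag y T a b v w μ h

theorem map_volume_affine {α : ℝ} (hα : α ≠ 0) (β : ℝ) :
    (volume : Measure ℝ).map (fun x => α * x + β) = ENNReal.ofReal |α⁻¹| • volume := by
  have hcomp : (fun x : ℝ => α * x + β) = (· + β) ∘ (α * ·) := rfl
  rw [hcomp, ← Measure.map_map (by fun_prop) (by fun_prop), Real.map_volume_mul_left hα,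
    Measure.map_smul, map_add_right_eq_self]

theorem map_restrict_Ioc_affine {α : ℝ} (hα : α ≠ 0) (β : ℝ) {a b : ℝ} (hab : a < b) :
    (volume.restrict (Ioc a b)).map (fun x => α * x + β) =
      ENNReal.ofReal (b - a) • volume[|uIoc (α * a + β) (α * b + β)] := by
  have hemb : MeasurableEmbedding fun x : ℝ => α * x + β :=
    (measurableEmbedding_addRight β).comp (measurableEmbedding_mulLeft₀ hα)
  have himage : (fun x => α * x + β) '' Icc a b = uIcc (α * a + β) (α * b + β) := by
    rw [← uIcc_of_le hab.le, ← image_add_const_uIcc, ← image_const_mul_uIcc, image_image]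
  have hvol : volume (uIoc (α * a + β) (α * b + β)) =
      ENNReal.ofReal |α| * ENNReal.ofReal (b - a) := by
    rw [Real.volume_uIoc, ← ENNReal.ofReal_mul (abs_nonneg α), add_sub_add_right_eq_sub,
      ← mul_sub, abs_mul, abs_of_pos (sub_pos.2 hab)]
  have hαpos : ENNReal.ofReal |α| ≠ 0 := by simpa using hα
  have hlen : ENNReal.ofReal (b - a) ≠ 0 := by simpa using hab
  have hscale : ENNReal.ofReal (b - a) * (ENNReal.ofReal |α| * ENNReal.ofReal (b - a))⁻¹ =
      ENNReal.ofReal |α⁻¹| := by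
    rw [ENNReal.mul_inv (.inl hαpos) (.inl ENNReal.ofReal_ne_top), mul_left_comm,
      ENNReal.mul_inv_cancel hlen ENNReal.ofReal_ne_top, mul_one, abs_inv,
      ENNReal.ofReal_inv_of_pos (abs_pos.2 hα)]
  have hae : uIoc (α * a + β) (α * b + β) =ᵐ[volume] uIcc (α * a + β) (α * b + β) := Ioc_ae_eq_Icc
  rw [ProbabilityTheory.cond, smul_smul, hvol, hscale, Measure.restrict_congr_set hae,
    ← Measure.restrict_smul, ← map_volume_affine hα β, ← himage, hemb.restrict_map,
    preimage_image_eq _ hemb.injective, Measure.restrict_congr_set Ioc_ae_eq_Icc]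

namespace ZigzagJoined

variable {y e : ℕ → ℝ} {T T' : ℝ → Set ℝ} {a b c : ℝ} {u v w p q : ℕ} {μ ν : Measure ℝ}

theorem mono (H : ZigzagJoined y T a b v w μ) (hT : ∀ x ∈ Icc a b, T x ⊆ T' x) :
    ZigzagJoined y T' a b v w μ := by
  obtain ⟨h, H⟩ := H
  exact ⟨h, { H with mem_tube := fun x hx => hT x hx (H.mem_tube x hx) }⟩

theorem refl (hv : y v ∈ T a) : ZigzagJoined y T a a v v 0 :=
  ⟨fun _ => y v, continuous_const, rfl, rfl, .refl (mem_range_self v),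
    fun x hx => le_antisymm hx.2 hx.1 ▸ hv, by simp⟩

theorem trans (H : ZigzagJoined y T a b u v μ) (H' : ZigzagJoined y T b c v w ν) :
    ZigzagJoined y T a c u w (μ + ν) := by
  obtain ⟨h, H⟩ := H
  obtain ⟨h', H'⟩ := H'
  have hab := H.piecewiseAffineOn.le
  have hbc := H'.piecewiseAffineOn.le
  have hb : h b = h' b := H.right.trans H'.left.symm
  set g : ℝ → ℝ := fun x => if x ≤ b then h x else h' x
  have hg : ∀ x ≤ b, g x = h x := fun x hx => if_pos hx
  have hg' : ∀ x, b ≤ x → g x = h' x := fun x hx => by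
    rcases hx.eq_or_lt with rfl | hx
    · exact (hg b le_rfl).trans hb
    · exact if_neg hx.not_ge
  have hcont : Continuous g :=
    H.continuous.if_le H'.continuous continuous_id continuous_const fun x hx => by
      obtain rfl : x = b := hx
      exact hb
  refine ⟨g, hcont, (hg a hab).trans H.left, (hg' c hbc).trans H'.right, ?_, fun x hx => ?_, ?_⟩
  · exact (H.piecewiseAffineOn.congr fun x hx => (hg x hx.2).symm).trans
      (H'.piecewiseAffineOn.congr fun x hx => (hg' x hx.1).symm)
  · rcases le_total x b with hxb | hbx
    · exact hg x hxb ▸ H.mem_tube x ⟨hx.1, hxb⟩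
    · exact hg' x hbx ▸ H'.mem_tube x ⟨hbx, hx.2⟩
  · have hae : g =ᵐ[volume.restrict (Ioc a b)] h :=
      EqOn.aeEq_restrict (fun x hx => hg x hx.2) measurableSet_Ioc
    have hae' : g =ᵐ[volume.restrict (Ioc b c)] h' :=
      EqOn.aeEq_restrict (fun x hx => hg' x hx.1.le) measurableSet_Ioc
    rw [← restrict_Ioc_add_restrict_Ioc _ hab hbc, Measure.map_add _ _ hcont.measurable,
      Measure.map_congr hae, Measure.map_congr hae', H.map_eq, H'.map_eq]

theorem segment (hab : a < b) (hne : y v ≠ y w) (hT : ∀ x ∈ Icc a b, uIcc (y v) (y w) ⊆ T x) :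
    ZigzagJoined y T a b v w (ENNReal.ofReal (b - a) • volume[|uIoc (y v) (y w)]) := by
  have hlen : b - a ≠ 0 := (sub_pos.2 hab).ne'
  set α := (y w - y v) / (b - a) with hα_def
  set β := y v - α * a with hβ_def
  have hα : α ≠ 0 := div_ne_zero (sub_ne_zero.2 hne.symm) hlen
  have ha : α * a + β = y v := by rw [hβ_def]; ring
  have hb : α * b + β = y w := by rw [hβ_def, hα_def]; field_simp; ring
  refine ⟨fun x => α * x + β, by fun_prop, ha, hb, ?_, fun x hx => hT x hx ?_, ?_⟩
  · exact .snoc (.refl ⟨v, ha.symm⟩) hab hα (eqOn_refl _ _) ⟨w, hb.symm⟩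
  · rw [← ha, ← hb, ← image_add_const_uIcc, ← image_const_mul_uIcc, uIcc_of_le hab.le, image_image]
    exact mem_image_of_mem _ hx
  · rw [map_restrict_Ioc_affine hα β hab, ha, hb]

theorem ascend (hy : StrictMono y) (hpv : p ≤ v) (hvw : v ≤ w) (hwq : w ≤ q)
    (he : ∀ k ∈ Finset.Ico v w, 0 < e k) (a : ℝ) :
    ZigzagJoined y (fun _ => Icc (y p) (y q)) a (a + ∑ k ∈ Finset.Ico v w, e k) v w
      (∑ k ∈ Finset.Ico v w, ENNReal.ofReal (e k) • volume[|Ioc (y k) (y (k + 1))]) := by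
  induction w, hvw using Nat.le_induction with
  | base => simpa using refl (T := fun _ => Icc (y p) (y q)) ⟨hy.monotone hpv, hy.monotone hwq⟩
  | succ w hvw ih =>
    have hstep := segment (T := fun _ => Icc (y p) (y q))
      (lt_add_of_pos_right (a + ∑ k ∈ Finset.Ico v w, e k) (he w (by simp [hvw])))
      (hy w.lt_succ_self).ne fun _ _ => uIcc_subset_Icc
        ⟨hy.monotone (hpv.trans hvw), hy.monotone (w.le_succ.trans hwq)⟩
        ⟨hy.monotone (hpv.trans (hvw.trans w.le_succ)), hy.monotone hwq⟩
    rw [add_sub_cancel_left, uIoc_of_le (hy w.lt_succ_self).le] at hstep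
    rw [Finset.sum_Ico_succ_top hvw, Finset.sum_Ico_succ_top hvw, ← add_assoc]
    refine (ih (w.le_succ.trans hwq) fun k hk => he k ?_).trans hstep
    exact Finset.Ico_subset_Ico_right w.le_succ hk

theorem descend (hy : StrictMono y) (hpv : p ≤ v) (hvw : v ≤ w) (hwq : w ≤ q)
    (he : ∀ k ∈ Finset.Ico v w, 0 < e k) (a : ℝ) :
    ZigzagJoined y (fun _ => Icc (y p) (y q)) a (a + ∑ k ∈ Finset.Ico v w, e k) w v
      (∑ k ∈ Finset.Ico v w, ENNReal.ofReal (e k) • volume[|Ioc (y k) (y (k + 1))]) := by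
  induction w, hvw using Nat.le_induction generalizing a with
  | base => simpa using refl (T := fun _ => Icc (y p) (y q)) ⟨hy.monotone hpv, hy.monotone hwq⟩
  | succ w hvw ih =>
    have hstep := segment (T := fun _ => Icc (y p) (y q))
      (lt_add_of_pos_right a (he w (by simp [hvw])))
      (hy w.lt_succ_self).ne' fun _ _ => uIcc_subset_Icc
        ⟨hy.monotone (hpv.trans (hvw.trans w.le_succ)), hy.monotone hwq⟩
        ⟨hy.monotone (hpv.trans hvw), hy.monotone (w.le_succ.trans hwq)⟩
    rw [add_sub_cancel_left, uIoc_of_ge (hy w.lt_succ_self).le] at hstep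
    rw [Finset.sum_Ico_succ_top hvw, Finset.sum_Ico_succ_top hvw, add_comm (Finset.sum _ _),
      add_comm (Finset.sum _ _), ← add_assoc]
    refine hstep.trans (ih (w.le_succ.trans hwq) (fun k hk => he k ?_) _)
    exact Finset.Ico_subset_Ico_right w.le_succ hk

end ZigzagJoined

/-- The number of crossings of the level `k` on the way `v → p → q → w` along the vertices
`p, …, q`, for `p ≤ k < q`. -/
def crossings (v w k : ℕ) : ℕ :=
  (if k < v then 1 else 0) + 1 + (if w ≤ k then 1 else 0)

theorem sum_crossings_nsmul {M : Type*} [AddCommMonoid M] {p q v w : ℕ} (hv : v ∈ Icc p q)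
    (hw : w ∈ Icc p q) (f : ℕ → M) :
    ∑ k ∈ Finset.Ico p v, f k + ∑ k ∈ Finset.Ico p q, f k + ∑ k ∈ Finset.Ico w q, f k =
      ∑ k ∈ Finset.Ico p q, crossings v w k • f k := by
  simp only [crossings, add_smul, one_smul, Finset.sum_add_distrib, ite_smul, zero_smul,
    ← Finset.sum_filter, Finset.Ico_filter_lt_of_le_right hv.2,
    Finset.Ico_filter_le_of_left_le hw.1]

theorem ZigzagJoined.of_forall_pos {y : ℕ → ℝ} (hy : StrictMono y) {p q v w : ℕ} (hv : v ∈ Icc p q)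
    (hw : w ∈ Icc p q) {d : ℕ → ℝ} (hd : ∀ k ∈ Finset.Ico p q, 0 < d k) (a : ℝ) :
    ZigzagJoined y (fun _ => Icc (y p) (y q)) a (a + ∑ k ∈ Finset.Ico p q, d k) v w
      (∑ k ∈ Finset.Ico p q, ENNReal.ofReal (d k) • volume[|Ioc (y k) (y (k + 1))]) := by
  set e : ℕ → ℝ := fun k => d k / crossings v w k
  have hcross (k) : 0 < (crossings v w k : ℝ) := by unfold crossings; positivity
  have he : ∀ k ∈ Finset.Ico p q, 0 < e k := fun k hk => div_pos (hd k hk) (hcross k)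
  have hde (k) : crossings v w k • e k = d k := by
    rw [nsmul_eq_mul, mul_div_cancel₀ _ (hcross k).ne']
  have hpath := ((descend hy le_rfl hv.1 hv.2
      (fun k hk => he k (Finset.Ico_subset_Ico_right hv.2 hk)) a).trans
    (ascend hy le_rfl (hv.1.trans hv.2) le_rfl he _)).trans
    (descend hy hw.1 hw.2 le_rfl (fun k hk => he k (Finset.Ico_subset_Ico_left hw.1 hk)) _)
  rw [add_assoc a, add_assoc a, sum_crossings_nsmul hv hw, sum_crossings_nsmul hv hw] at hpath
  simpa only [← smul_assoc, ← ENNReal.ofReal_nsmul, hde] using hpath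

end Zigzag

section LocalPath

theorem map_restrict_Ioc_pos {F : ℝ → ℝ} (hF : Continuous F) {a b x : ℝ} (hab : a < b)
    (hx : x ∈ Icc a b) {U : Set ℝ} (hU : IsOpen U) (hxU : F x ∈ U) :
    0 < (volume.restrict (Ioc a b)).map F U := by
  have hpre : IsOpen (F ⁻¹' U) := hU.preimage hF
  have hne : (F ⁻¹' U ∩ Ioo a b).Nonempty := by
    rw [← closure_Ioo hab.ne] at hx
    exact mem_closure_iff.1 hx _ hpre hxU
  rw [Measure.map_apply hF.measurable hU.measurableSet, Measure.restrict_apply hpre.measurableSet]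
  exact ((hpre.inter isOpen_Ioo).measure_pos volume hne).trans_le
    (measure_mono (inter_subset_inter_right _ Ioo_subset_Ioc_self))

theorem exists_mem_Ioo_of_isPreconnected {X Y : Type*} [TopologicalSpace X] [LinearOrder Y]
    [DenselyOrdered Y] [TopologicalSpace Y] [OrderClosedTopology Y] {s : Set X}
    (hs : IsPreconnected s) {F : X → Y} (hF : ContinuousOn F s) {c d : Y} (hcd : c < d)
    (hc : ∃ x ∈ s, c < F x) (hd : ∃ x ∈ s, F x < d) : ∃ x ∈ s, F x ∈ Ioo c d := by
  obtain ⟨x, hx, hcx⟩ := hc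
  obtain ⟨x', hx', hdx'⟩ := hd
  rcases lt_or_ge c (F x') with hcx' | hcx'
  · exact ⟨x', hx', hcx', hdx'⟩
  obtain ⟨t, hct, ht⟩ := exists_between (lt_min hcd hcx)
  obtain ⟨htd, htx⟩ := lt_min_iff.1 ht
  obtain ⟨z, hz, rfl⟩ := hs.intermediate_value hx' hx hF ⟨hcx'.trans hct.le, htx.le⟩
  exact ⟨z, hz, hct, htd⟩

theorem ZigzagJoined.levelAverage_map {y : ℕ → ℝ} (hy : StrictMono y) {p q n v w : ℕ}
    (hqn : q ≤ n) (hv : v ∈ Icc p q) (hw : w ∈ Icc p q) {F : ℝ → ℝ} (hF : Continuous F) {a b : ℝ}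
    (hab : a < b) (hmaps : MapsTo F (Icc a b) (Icc (y p) (y q)))
    (hlow : ∃ x ∈ Icc a b, F x < y (p + 1)) (hhigh : ∀ k < q, ∃ x ∈ Icc a b, y k < F x)
    [NullSingletonClass ((volume.restrict (Ioc a b)).map F)] :
    ZigzagJoined y (fun _ => Icc (y p) (y q)) a b v w
      (levelAverage y n ((volume.restrict (Ioc a b)).map F)) := by
  set μ := (volume.restrict (Ioc a b)).map F with hμ
  have hfin : IsFiniteMeasure μ := Measure.isFiniteMeasure_map _ _
  have hsupp : μ.restrict (Ioc (y p) (y q)) = μ := by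
    rw [Measure.restrict_congr_set Ioc_ae_eq_Icc, Measure.restrict_eq_self_of_ae_mem]
    refine (ae_map_iff hF.aemeasurable measurableSet_Icc).2 ?_
    exact (ae_restrict_mem measurableSet_Ioc).mono fun x hx => hmaps (Ioc_subset_Icc_self hx)
  have hpos : ∀ k ∈ Finset.Ico p q, 0 < μ.real (Ioc (y k) (y (k + 1))) := fun k hk => by
    obtain ⟨hpk, hkq⟩ := Finset.mem_Ico.1 hk
    obtain ⟨x, hx, hxk⟩ := exists_mem_Ioo_of_isPreconnected isPreconnected_Icc hF.continuousOn
      (hy k.lt_succ_self) (hhigh k hkq)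
      (hlow.imp fun x hx => ⟨hx.1, hx.2.trans_le (hy.monotone (Nat.succ_le_succ hpk))⟩)
    exact ENNReal.toReal_pos ((map_restrict_Ioc_pos hF hab hx isOpen_Ioo hxk).trans_le
      (measure_mono Ioo_subset_Ioc_self)).ne' (measure_ne_top _ _)
  have hsum : a + ∑ k ∈ Finset.Ico p q, μ.real (Ioc (y k) (y (k + 1))) = b := by
    have huniv : μ.real (Ioc (y p) (y q)) = b - a := by
      rw [← measureReal_restrict_apply_univ, hsupp, hμ, map_measureReal_apply hF.measurable .univ]
      simp [hab.le]
    rw [← measureReal_Ioc_eq_sum hy.monotone, huniv, add_sub_cancel]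
  have hpath := ZigzagJoined.of_forall_pos hy hv hw hpos a
  rw [hsum] at hpath
  rw [← hsupp, levelAverage_restrict_Ioc hy.monotone μ hqn]
  simpa only [ofReal_measureReal (measure_ne_top μ _)] using hpath

end LocalPath

section Grid

/-- The `k`-th point of the grid of mesh `1 / N`. -/
def gridPoint (N k : ℕ) : ℝ :=
  k / N

variable {N : ℕ}

theorem gridPoint_zero (N : ℕ) : gridPoint N 0 = 0 := by
  simp [gridPoint]

theorem gridPoint_self (hN : 0 < N) : gridPoint N N = 1 :=
  div_self (by positivity)

theorem strictMono_gridPoint (hN : 0 < N) : StrictMono (gridPoint N) := fun j k hjk => by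
  unfold gridPoint
  gcongr

theorem gridPoint_floor_le (hN : 0 < N) {t : ℝ} (ht : 0 ≤ t) : gridPoint N ⌊N * t⌋₊ ≤ t :=
  (div_le_iff₀' (by positivity)).2 (Nat.floor_le (by positivity))

theorem lt_gridPoint_floor_add_one (hN : 0 < N) (t : ℝ) : t < gridPoint N (⌊N * t⌋₊ + 1) :=
  (lt_div_iff₀' (by positivity)).2 (by exact_mod_cast Nat.lt_floor_add_one (N * t))

theorem le_gridPoint_ceil (hN : 0 < N) (t : ℝ) : t ≤ gridPoint N ⌈N * t⌉₊ :=
  (le_div_iff₀' (by positivity)).2 (Nat.le_ceil _)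

theorem gridPoint_lt_of_lt_ceil (hN : 0 < N) {t : ℝ} {k : ℕ} (hk : k < ⌈N * t⌉₊) :
    gridPoint N k < t :=
  (div_lt_iff₀' (by positivity)).2 (Nat.lt_ceil.1 hk)

theorem gridPoint_add_one (N k : ℕ) : gridPoint N (k + 1) = gridPoint N k + 1 / N := by
  unfold gridPoint
  push_cast
  ring

theorem gridPoint_ceil_lt (hN : 0 < N) {t : ℝ} (ht : 0 ≤ t) :
    gridPoint N ⌈N * t⌉₊ < t + 1 / N := by
  have hN' : (0 : ℝ) < N := by positivity
  rw [gridPoint, div_lt_iff₀ hN', add_mul, one_div_mul_cancel hN'.ne', mul_comm t]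
  exact Nat.ceil_lt_add_one (by positivity)

theorem ceil_mul_le (N : ℕ) {t : ℝ} (ht : t ≤ 1) : ⌈N * t⌉₊ ≤ N :=
  Nat.ceil_le.2 (mul_le_of_le_one_right (Nat.cast_nonneg N) ht)

theorem floor_mul_mem_Icc {m M t : ℝ} (ht : t ∈ Icc m M) :
    ⌊N * t⌋₊ ∈ Icc ⌊N * m⌋₊ ⌈N * M⌉₊ :=
  ⟨Nat.floor_mono (by gcongr; exact ht.1),
    (Nat.floor_le_ceil _).trans (Nat.ceil_mono (by gcongr; exact ht.2))⟩

theorem Icc_gridPoint_subset (hN : 0 < N) {m M t : ℝ} (hm : 0 ≤ m) (hM : M ≤ 1)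
    (hmM : M ≤ m + 1 / N) (ht : t ∈ Icc m M) :
    Icc (gridPoint N ⌊N * m⌋₊) (gridPoint N ⌈N * M⌉₊) ⊆
      Metric.closedBall t (2 / N) ∩ Icc 0 1 := by
  have hmono := (strictMono_gridPoint hN).monotone
  have hfloor : m < gridPoint N ⌊N * m⌋₊ + 1 / N :=
    gridPoint_add_one N _ ▸ lt_gridPoint_floor_add_one hN m
  have hceil := gridPoint_ceil_lt hN (hm.trans (ht.1.trans ht.2))
  have hzero : 0 ≤ gridPoint N ⌊N * m⌋₊ := gridPoint_zero N ▸ hmono (Nat.zero_le _)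
  have hone : gridPoint N ⌈N * M⌉₊ ≤ 1 := gridPoint_self hN ▸ hmono (ceil_mul_le N hM)
  have htwo : (2 : ℝ) / N = 1 / N + 1 / N := by ring
  intro s hs
  refine ⟨?_, hzero.trans hs.1, hs.2.trans hone⟩
  rw [Real.closedBall_eq_Icc, htwo]
  exact ⟨by linarith [ht.2, hs.1], by linarith [ht.1, hs.2]⟩

theorem zigzagJoined_gridPoint (hN : 0 < N) {F : ℝ → ℝ} (hF : Continuous F)
    (hF01 : ∀ x, F x ∈ Icc (0 : ℝ) 1) {a b : ℝ} (hab : a < b)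
    (hosc : ∀ x ∈ Icc a b, ∀ x' ∈ Icc a b, F x ≤ F x' + 1 / N)
    [NullSingletonClass ((volume.restrict (Ioc a b)).map F)] :
    ZigzagJoined (gridPoint N) (fun x => Metric.closedBall (F x) (2 / N) ∩ Icc 0 1) a b
      ⌊N * F a⌋₊ ⌊N * F b⌋₊ (levelAverage (gridPoint N) N ((volume.restrict (Ioc a b)).map F)) := by
  have hne : (Icc a b).Nonempty := nonempty_Icc.2 hab.le
  obtain ⟨xmin, hxmin, hmin⟩ := isCompact_Icc.exists_isMinOn hne hF.continuousOn
  obtain ⟨xmax, hxmax, hmax⟩ := isCompact_Icc.exists_isMaxOn hne hF.continuousOn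
  have hrange (x) (hx : x ∈ Icc a b) : F x ∈ Icc (F xmin) (F xmax) := ⟨hmin hx, hmax hx⟩
  refine (ZigzagJoined.levelAverage_map (p := ⌊N * F xmin⌋₊) (q := ⌈N * F xmax⌉₊)
    (strictMono_gridPoint hN) (ceil_mul_le N (hF01 xmax).2)
    (floor_mul_mem_Icc (hrange a ⟨le_rfl, hab.le⟩)) (floor_mul_mem_Icc (hrange b ⟨hab.le, le_rfl⟩))
    hF hab (fun x hx => ?_) ?_ fun k hk => ?_).mono fun x hx => ?_
  · exact Icc_subset_Icc (gridPoint_floor_le hN (hF01 xmin).1) (le_gridPoint_ceil hN _)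
      (hrange x hx)
  · exact ⟨xmin, hxmin, lt_gridPoint_floor_add_one hN _⟩
  · exact ⟨xmax, hxmax, gridPoint_lt_of_lt_ceil hN hk⟩
  · exact Icc_gridPoint_subset hN (hF01 xmin).1 (hF01 xmax).2 (hosc xmax hxmax xmin hxmin)
      (hrange x hx)

end Grid

section Approximation

theorem exists_monotone_extMap_le_add (f : C(unitInterval, unitInterval)) {ε : ℝ} (hε : 0 < ε) :
    ∃ t : ℕ → unitInterval, t 0 = 0 ∧ Monotone t ∧ (∃ n, t n = 1) ∧
      ∀ n, ∀ x ∈ Icc (t n : ℝ) (t (n + 1)), ∀ x' ∈ Icc (t n : ℝ) (t (n + 1)),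
        extMap f x ≤ extMap f x' + ε := by
  obtain ⟨t, ht0, ht, ⟨n, hn⟩, hball⟩ := exists_monotone_Icc_subset_open_cover_unitInterval
    (c := fun z : unitInterval => f ⁻¹' Metric.ball z (ε / 2))
    (fun z => Metric.isOpen_ball.preimage f.continuous)
    (fun x _ => mem_iUnion.2 ⟨f x, Metric.mem_ball_self (half_pos hε)⟩)
  refine ⟨t, ht0, ht, ⟨n, hn n le_rfl⟩, fun n x hx x' hx' => ?_⟩
  obtain ⟨z, hz⟩ := hball n
  have hmem (x : ℝ) (hx : x ∈ Icc (t n : ℝ) (t (n + 1))) : |extMap f x - z| < ε / 2 := by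
    lift x to unitInterval using ⟨(t n).2.1.trans hx.1, hx.2.trans (t (n + 1)).2.2⟩
    rw [extMap_coe]
    exact hz hx
  linarith [(abs_lt.1 (hmem x hx)).2, (abs_lt.1 (hmem x' hx')).1]

variable {f : C(unitInterval, unitInterval)} {N : ℕ}

theorem nullSingletonClass_map_extMap (hf : MeasurePreserving f volume volume) {a b : ℝ}
    (ha : 0 ≤ a) (hb : b ≤ 1) :
    NullSingletonClass ((volume.restrict (Ioc a b)).map (extMap f)) := by
  have hle : (volume.restrict (Ioc a b)).map (extMap f) ≤ volume.restrict (Icc 0 1) := by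
    rw [← ((measurePreserving_extMap_iff f).2 hf).map_eq]
    exact Measure.map_mono (Measure.restrict_mono_set _
      (Ioc_subset_Icc_self.trans (Icc_subset_Icc ha hb))) (continuous_extMap f).measurable
  exact ⟨fun x => le_antisymm ((hle {x}).trans_eq (measure_singleton x)) zero_le⟩

theorem zigzagJoined_extMap (hf : MeasurePreserving f volume volume) (hN : 0 < N) :
    ZigzagJoined (gridPoint N) (fun x => Metric.closedBall (extMap f x) (2 / N) ∩ Icc 0 1) 0 1
      ⌊N * extMap f 0⌋₊ ⌊N * extMap f 1⌋₊
      (levelAverage (gridPoint N) N ((volume.restrict (Ioc 0 1)).map (extMap f))) := by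
  obtain ⟨t, ht0, ht, ⟨n, hn⟩, hosc⟩ :=
    exists_monotone_extMap_le_add f (ε := 1 / N) (by positivity)
  suffices H : ∀ n, ZigzagJoined (gridPoint N)
      (fun x => Metric.closedBall (extMap f x) (2 / N) ∩ Icc 0 1) 0 (t n)
      ⌊N * extMap f 0⌋₊ ⌊N * extMap f (t n)⌋₊
      (levelAverage (gridPoint N) N ((volume.restrict (Ioc 0 (t n : ℝ))).map (extMap f))) by
    simpa only [hn, Icc.coe_one] using H n
  intro n
  induction n with
  | zero =>
    obtain ⟨h0, h1⟩ := extMap_mem_Icc f 0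
    have hmem := Icc_gridPoint_subset hN h0 h1 (le_add_of_nonneg_right (by positivity))
      ⟨le_rfl, le_rfl⟩ ⟨le_rfl, (strictMono_gridPoint hN).monotone (Nat.floor_le_ceil _)⟩
    simpa [ht0, levelAverage_zero] using ZigzagJoined.refl hmem
  | succ n ih =>
    rcases (ht (Nat.le_add_right n 1)).eq_or_lt with heq | hlt
    · rwa [← heq]
    have hnull := nullSingletonClass_map_extMap hf (t n).2.1 (t (n + 1)).2.2
    rw [← restrict_Ioc_add_restrict_Ioc _ (t n).2.1 hlt.le,
      Measure.map_add _ _ (continuous_extMap f).measurable, levelAverage_add]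
    exact ih.trans (zigzagJoined_gridPoint hN (continuous_extMap f) (extMap_mem_Icc f) hlt (hosc n))

theorem exists_piecewiseAffineMap_near (f : CLam) (hN : 0 < N) :
    ∃ g : CLam, PiecewiseAffineMap g.1 ∧
      (∀ c, IsDeterminingValue g.1 c → c ∈ range (gridPoint N)) ∧ dist g f ≤ 2 / N := by
  obtain ⟨h, H⟩ := zigzagJoined_extMap f.2 hN
  obtain ⟨g, hg⟩ := exists_eqOn_extMap H.continuous fun x hx => (H.mem_tube x hx).2
  have hpieces := H.piecewiseAffineOn.congr hg
  have hunif : levelAverage (gridPoint N) N (volume.restrict (Icc 0 1)) =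
      volume.restrict (Icc 0 1) := by
    have := levelAverage_volume_restrict_Ioc (strictMono_gridPoint hN).monotone N
    rwa [gridPoint_zero, gridPoint_self hN, Measure.restrict_congr_set Ioc_ae_eq_Icc] at this
  have hmap : (volume.restrict (Icc 0 1)).map (extMap g) = volume.restrict (Icc 0 1) := by
    rw [← Measure.map_congr (hg.aeEq_restrict measurableSet_Icc),
      ← Measure.restrict_congr_set Ioc_ae_eq_Icc, H.map_eq,
      Measure.restrict_congr_set Ioc_ae_eq_Icc, ((measurePreserving_extMap_iff f.1).2 f.2).map_eq,
      hunif]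
  refine ⟨⟨g, (measurePreserving_extMap_iff g).1 ⟨(continuous_extMap g).measurable, hmap⟩⟩,
    hpieces.piecewiseAffineMap, fun c => hpieces.mem_of_isDeterminingValue,
    (ContinuousMap.dist_le (by positivity)).2 fun x => ?_⟩
  have hx := (H.mem_tube x x.2).1
  rwa [hg x.2, extMap_coe, extMap_coe] at hx

end Approximation

/-- The set of piecewise affine maps in `C_λ` all of whose determining values are
rational is dense in `C_λ` with respect to the uniform metric. -/
theorem stmt8 :
    Dense {f : CLam | PiecewiseAffineMap f.1 ∧
      ∀ c : ℝ, IsDeterminingValue f.1 c → ∃ q : ℚ, c = (q : ℝ)} := by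
  refine Metric.dense_iff.2 fun f ε hε => ?_
  obtain ⟨n, hn⟩ := exists_nat_one_div_lt (half_pos hε)
  obtain ⟨g, hg, hvalues, hdist⟩ := exists_piecewiseAffineMap_near f n.succ_pos
  refine ⟨g, Metric.mem_ball.2 (hdist.trans_lt ?_), hg, fun c hc => ?_⟩
  · rw [← mul_one_div, Nat.cast_succ]
    linarith
  · obtain ⟨k, rfl⟩ := hvalues c hc
    exact ⟨k / n.succ, by simp [gridPoint]⟩

end
end
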